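/- The number of isomorphism classes of maximal almost rigid representations of Q equals the Catalan number (1/(n+2))·C(2n+2, n+1), where C(2n+2, n+1) is the binomial coefficient. -/

import Mathlib

open scoped Classical

noncomputable section

namespace CambrianA

/-! ### Combinatorics of a type `A_{n+2}` quiver.

Vertices are `1, …, n+2`.  For `1 ≤ i ≤ n+1`, `ε i = true` means that the arrow between
`i` and `i+1` is oriented `i → i+1` (`i` is *upper-barred*), and `ε i = false` means it is
oriented `(i+1) → i` (`i` is *lower-barred*). -/

/-- `MaxIncr n ε i j` : the path `i → i+1 → ⋯ → j` is a maximal increasing path of `Q`. -/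
def MaxIncr (n : ℕ) (ε : ℕ → Bool) (i j : ℕ) : Prop :=
  1 ≤ i ∧ i ≤ j ∧ j ≤ n + 2 ∧ (∀ ℓ, i ≤ ℓ → ℓ < j → ε ℓ = true) ∧
    (i = 1 ∨ ε (i - 1) = false) ∧ (j = n + 2 ∨ ε j = false)

/-- `MaxDecr n ε i j` : the path `i → i-1 → ⋯ → j` is a maximal decreasing path of `Q`. -/
def MaxDecr (n : ℕ) (ε : ℕ → Bool) (i j : ℕ) : Prop :=
  1 ≤ j ∧ j ≤ i ∧ i ≤ n + 2 ∧ (∀ ℓ, j ≤ ℓ → ℓ < i → ε ℓ = false) ∧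
    (i = n + 2 ∨ ε i = true) ∧ (j = 1 ∨ ε (j - 1) = true)

/-- Vertices of the polygon lying on the lower boundary: `0`, `n+2` and lower-barred ones. -/
def LowerVertex (n : ℕ) (ε : ℕ → Bool) (x : ℕ) : Prop :=
  x = 0 ∨ x = n + 2 ∨ (1 ≤ x ∧ x ≤ n + 1 ∧ ε x = false)

/-- Vertices of the polygon lying on the upper boundary: `0`, `n+2` and upper-barred ones. -/
def UpperVertex (n : ℕ) (ε : ℕ → Bool) (x : ℕ) : Prop :=
  x = 0 ∨ x = n + 2 ∨ (1 ≤ x ∧ x ≤ n + 1 ∧ ε x = true)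

/-- `(a,b)` is a lower boundary edge: `a < b` are consecutive lower vertices. -/
def LowerEdge (n : ℕ) (ε : ℕ → Bool) (a b : ℕ) : Prop :=
  LowerVertex n ε a ∧ LowerVertex n ε b ∧ a < b ∧
    ∀ c, LowerVertex n ε c → ¬(a < c ∧ c < b)

/-- `(a,b)` is an upper boundary edge: `a < b` are consecutive upper vertices. -/
def UpperEdge (n : ℕ) (ε : ℕ → Bool) (a b : ℕ) : Prop :=
  UpperVertex n ε a ∧ UpperVertex n ε b ∧ a < b ∧
    ∀ c, UpperVertex n ε c → ¬(a < c ∧ c < b)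

def BoundaryEdge (n : ℕ) (ε : ℕ → Bool) (a b : ℕ) : Prop :=
  LowerEdge n ε a b ∨ UpperEdge n ε a b

/-- `IsHook n ε a lo hi` : the hook of the arrow of `Q` between `a` and `a+1` is the
maximal path supported on the interval `[lo, hi]`.
If `ε a = true` (arrow `a → a+1`, source `a`), the hook is the maximal decreasing path
starting at `a`; if `ε a = false` (arrow `a+1 → a`, source `a+1`), the hook is the
maximal increasing path starting at `a+1`. -/
def IsHook (n : ℕ) (ε : ℕ → Bool) (a lo hi : ℕ) : Prop :=
  if ε a = true then
    hi = a ∧ 1 ≤ lo ∧ lo ≤ a ∧ (∀ ℓ, lo ≤ ℓ → ℓ < a → ε ℓ = false) ∧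
      (lo = 1 ∨ ε (lo - 1) = true)
  else
    lo = a + 1 ∧ a + 1 ≤ hi ∧ hi ≤ n + 2 ∧ (∀ ℓ, a + 1 ≤ ℓ → ℓ < hi → ε ℓ = true) ∧
      (hi = n + 2 ∨ ε hi = false)

/-- `IsCohook n ε a lo hi` : the cohook of the arrow of `Q` between `a` and `a+1` is the
maximal path supported on the interval `[lo, hi]`, ending at the target of the arrow. -/
def IsCohook (n : ℕ) (ε : ℕ → Bool) (a lo hi : ℕ) : Prop :=
  if ε a = true then
    lo = a + 1 ∧ a + 1 ≤ hi ∧ hi ≤ n + 2 ∧ (∀ ℓ, a + 1 ≤ ℓ → ℓ < hi → ε ℓ = false) ∧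
      (hi = n + 2 ∨ ε hi = true)
  else
    hi = a ∧ 1 ≤ lo ∧ lo ≤ a ∧ (∀ ℓ, lo ≤ ℓ → ℓ < a → ε ℓ = true) ∧
      (lo = 1 ∨ ε (lo - 1) = false)

/-- Counterclockwise neighbor `R⁻¹(ℓ)` of the vertex `ℓ` of the polygon `P(Q)`, for the
cyclic order `0`, lower-barred vertices increasing, `n+2`, upper-barred vertices
decreasing. -/
def Rinv (n : ℕ) (ε : ℕ → Bool) (ℓ : ℕ) : ℕ :=
  if ℓ = n + 2 then sSup ({0} ∪ {x | 1 ≤ x ∧ x ≤ n + 1 ∧ ε x = true})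
  else if 1 ≤ ℓ ∧ ℓ ≤ n + 1 ∧ ε ℓ = true then
    sSup ({0} ∪ {x | 1 ≤ x ∧ x < ℓ ∧ ε x = true})
  else
    sInf ({n + 2} ∪ {x | ℓ < x ∧ x ≤ n + 1 ∧ ε x = false})

/-- `γ(i′,j′)` is a pivot of `γ(i,j)`. -/
def IsPivot (n : ℕ) (ε : ℕ → Bool) (i j i' j' : ℕ) : Prop :=
  (i' = Rinv n ε i ∧ j' = j ∧ Rinv n ε i < j) ∨
    (i' = i ∧ j' = Rinv n ε j ∧ i < Rinv n ε j)

/-! ### Geometry of the polygon `P(Q)`.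

The plane is identified with `ℂ`; `p x` is the vertex of the polygon labeled `x`,
for `0 ≤ x ≤ n+2`. -/

/-- The hypotheses on the points `p 0, …, p (n+2)` realizing the polygon `P(Q)`:
strictly increasing `x`-coordinates; `p 0` and `p (n+2)` on a common horizontal line `L`;
upper-barred vertices above `L`, lower-barred vertices below `L`; convex position. -/
def PolyPts (n : ℕ) (ε : ℕ → Bool) (p : ℕ → ℂ) : Prop :=
  (∀ a b, a < b → b ≤ n + 2 → (p a).re < (p b).re) ∧
    (p (n + 2)).im = (p 0).im ∧
    (∀ i, 1 ≤ i → i ≤ n + 1 →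
      (ε i = true → (p 0).im < (p i).im) ∧ (ε i = false → (p i).im < (p 0).im)) ∧
    ∀ i, i ≤ n + 2 → p i ∉ convexHull ℝ (p '' {j | j ≤ n + 2 ∧ j ≠ i})

/-- The line segment `γ(e.1, e.2)` of the polygon. -/
def Seg (p : ℕ → ℂ) (e : ℕ × ℕ) : Set ℂ := segment ℝ (p e.1) (p e.2)

/-- Two segments cross when they intersect in a point that is not a common endpoint. -/
def Cross (p : ℕ → ℂ) (e f : ℕ × ℕ) : Prop :=
  ∃ z, z ∈ Seg p e ∧ z ∈ Seg p f ∧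
    ¬((z = p e.1 ∨ z = p e.2) ∧ (z = p f.1 ∨ z = p f.2))

/-- Slope of the segment `γ(e.1, e.2)`. -/
def slope (p : ℕ → ℂ) (e : ℕ × ℕ) : ℝ :=
  ((p e.2).im - (p e.1).im) / ((p e.2).re - (p e.1).re)

def ValidPair (n : ℕ) (e : ℕ × ℕ) : Prop := e.1 < e.2 ∧ e.2 ≤ n + 2

/-- A triangulation of `P(Q)`: a maximal collection of pairwise noncrossing segments. -/
def IsTriangulation (n : ℕ) (p : ℕ → ℂ) (T : Finset (ℕ × ℕ)) : Prop :=
  (∀ e ∈ T, ValidPair n e) ∧ (∀ e ∈ T, ∀ f ∈ T, e ≠ f → ¬Cross p e f) ∧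
    ∀ e, ValidPair n e → e ∉ T → ∃ f ∈ T, Cross p e f

/-- Cross product of two planar vectors; positive iff `(u, v)` is counterclockwise. -/
def cross2 (u v : ℂ) : ℝ := u.re * v.im - u.im * v.re

/-- Arrows of the adjacency quiver `Q(T)` of a triangulation `T`: `e → f` whenever
`e` and `f` are sides of a common triangle of `T` and `f` follows `e` going
counterclockwise around that triangle. -/
def TriArrow (p : ℕ → ℂ) (T : Finset (ℕ × ℕ)) (e f : ℕ × ℕ) : Prop :=
  ∃ a b c : ℕ, a < b ∧ b < c ∧ (a, b) ∈ T ∧ (b, c) ∈ T ∧ (a, c) ∈ T ∧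
    ((0 < cross2 (p b - p a) (p c - p a) ∧
        ((e = (a, b) ∧ f = (b, c)) ∨ (e = (b, c) ∧ f = (a, c)) ∨
          (e = (a, c) ∧ f = (a, b)))) ∨
      (cross2 (p b - p a) (p c - p a) < 0 ∧
        ((e = (a, c) ∧ f = (b, c)) ∨ (e = (b, c) ∧ f = (a, b)) ∨
          (e = (a, b) ∧ f = (a, c)))))

/-! ### Representations of `Q` -/

/-- A finite dimensional representation of the quiver `Q` of type `A_{n+2}` over `k`.
The vector spaces are indexed by `ℕ`, and are required to vanish outside the set
`{1, …, n+2}` of vertices of `Q`.  For each `i`, `fwd i : V i → V (i+1)` is the structure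
map of the arrow `i → i+1` (it is required to vanish when the arrow is oriented in the
other direction, i.e. `ε i = false`) and `bwd i : V (i+1) → V i` is the structure map of
the arrow `i+1 → i` (required to vanish when `ε i = true`). -/
structure ARep (k : Type) [Field k] (n : ℕ) (ε : ℕ → Bool) where
  V : ℕ → Type
  [acg : ∀ x, AddCommGroup (V x)]
  [mod : ∀ x, Module k (V x)]
  [fdim : ∀ x, FiniteDimensional k (V x)]
  triv : ∀ x, x = 0 ∨ n + 2 < x → ∀ v : V x, v = 0
  fwd : ∀ i, V i →ₗ[k] V (i + 1)
  bwd : ∀ i, V (i + 1) →ₗ[k] V i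
  fwd_zero : ∀ i, ε i = false → fwd i = 0
  bwd_zero : ∀ i, ε i = true → bwd i = 0

attribute [instance] ARep.acg ARep.mod ARep.fdim

variable {k : Type} [Field k] {n : ℕ} {ε : ℕ → Bool}

/-- Morphisms of representations. -/
@[ext]
structure ARep.Hom (M N : ARep k n ε) where
  app : ∀ x, M.V x →ₗ[k] N.V x
  comm_fwd : ∀ i (v : M.V i), app (i + 1) (M.fwd i v) = N.fwd i (app i v)
  comm_bwd : ∀ i (v : M.V (i + 1)), app i (M.bwd i v) = N.bwd i (app (i + 1) v)

/-- The identity morphism. -/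
def ARep.Hom.id (M : ARep k n ε) : M.Hom M :=
  ⟨fun _ => LinearMap.id, fun _ _ => rfl, fun _ _ => rfl⟩

/-- Composition of morphisms. -/
def ARep.Hom.comp {M N P : ARep k n ε} (g : N.Hom P) (f : M.Hom N) : M.Hom P where
  app x := (g.app x).comp (f.app x)
  comm_fwd i v := by simp only [LinearMap.comp_apply, f.comm_fwd, g.comm_fwd]
  comm_bwd i v := by simp only [LinearMap.comp_apply, f.comm_bwd, g.comm_bwd]

/-- Sum of two morphisms. -/
def ARep.Hom.add {M N : ARep k n ε} (f g : M.Hom N) : M.Hom N where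
  app x := f.app x + g.app x
  comm_fwd i v := by
    simp only [LinearMap.add_apply, f.comm_fwd, g.comm_fwd, map_add]
  comm_bwd i v := by
    simp only [LinearMap.add_apply, f.comm_bwd, g.comm_bwd, map_add]

/-- Scalar multiple of a morphism. -/
def ARep.Hom.smul {M N : ARep k n ε} (c : k) (f : M.Hom N) : M.Hom N where
  app x := c • f.app x
  comm_fwd i v := by simp only [LinearMap.smul_apply, f.comm_fwd, map_smul]
  comm_bwd i v := by simp only [LinearMap.smul_apply, f.comm_bwd, map_smul]

/-- Isomorphism of representations. -/
def ARep.Iso (M N : ARep k n ε) : Prop :=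
  ∃ f : M.Hom N, ∀ x, Function.Bijective (f.app x)

/-- The zero representation(s). -/
def ARep.IsZero (M : ARep k n ε) : Prop := ∀ x, ∀ v : M.V x, v = 0

/-- The support of a representation. -/
def ARep.supp (M : ARep k n ε) : Set ℕ := {x | ∃ v : M.V x, v ≠ 0}

/-- Direct sum of two representations. -/
def ARep.dsum (M N : ARep k n ε) : ARep k n ε where
  V x := M.V x × N.V x
  acg _ := by infer_instance
  mod _ := by infer_instance
  fdim _ := by infer_instance
  triv x hx v := by
    have h1 := M.triv x hx v.1
    have h2 := N.triv x hx v.2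
    exact Prod.ext h1 h2
  fwd i := (M.fwd i).prodMap (N.fwd i)
  bwd i := (M.bwd i).prodMap (N.bwd i)
  fwd_zero i h := by
    show (M.fwd i).prodMap (N.fwd i) = 0
    rw [M.fwd_zero i h, N.fwd_zero i h]
    apply LinearMap.ext; rintro ⟨a, b⟩; simp
  bwd_zero i h := by
    show (M.bwd i).prodMap (N.bwd i) = 0
    rw [M.bwd_zero i h, N.bwd_zero i h]
    apply LinearMap.ext; rintro ⟨a, b⟩; simp

/-- One dimensional space `k` if `P` holds, `0` otherwise (as a submodule of `k`). -/
def fiber (k : Type) [Field k] (P : Prop) : Submodule k k := if P then ⊤ else ⊥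

/-- The canonical map `fiber k P → fiber k Q` : "identity" if `P ∧ Q`, zero otherwise. -/
def fiberMap (k : Type) [Field k] (P Q : Prop) : fiber k P →ₗ[k] fiber k Q :=
  if h : P ∧ Q then
    { toFun := fun v => ⟨(v : k), by rw [fiber, if_pos h.2]; exact Submodule.mem_top⟩
      map_add' := fun _ _ => rfl
      map_smul' := fun _ _ => rfl }
  else 0

/-- The zero representation. -/
def zeroRep (k : Type) [Field k] (n : ℕ) (ε : ℕ → Bool) : ARep k n ε where
  V _ := ↥(fiber k False)
  acg _ := by infer_instance
  mod _ := by infer_instance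
  fdim _ := by infer_instance
  triv x _ v := by
    have hfib : fiber k False = ⊥ := if_neg (fun h : False => h.elim)
    obtain ⟨w, hw⟩ := v
    apply Subtype.ext
    have hb : w ∈ (⊥ : Submodule k k) := hfib ▸ hw
    exact (Submodule.mem_bot k).1 hb
  fwd _ := 0
  bwd _ := 0
  fwd_zero _ _ := rfl
  bwd_zero _ _ := rfl

/-- The condition for a vertex `x` to be in the support of the interval representation
`M(i,j)`. -/
def SuppCond (n i j x : ℕ) : Prop := i ≤ x ∧ x ≤ j ∧ 1 ≤ x ∧ x ≤ n + 2

/-- The interval (string) representation `M(i,j)` of `Q`: one dimensional at each vertex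
`x` with `i ≤ x ≤ j`, zero elsewhere, with identity maps on all arrows whose endpoints
both lie in `[i,j]`. -/
def intervalRep (k : Type) [Field k] (n : ℕ) (ε : ℕ → Bool) (i j : ℕ) : ARep k n ε where
  V x := ↥(fiber k (SuppCond n i j x))
  acg _ := by infer_instance
  mod _ := by infer_instance
  fdim _ := by infer_instance
  triv x hx v := by
    have hP : ¬SuppCond n i j x := by simp only [SuppCond]; omega
    have hfib : fiber k (SuppCond n i j x) = ⊥ := if_neg hP
    obtain ⟨w, hw⟩ := v
    apply Subtype.ext
    have hb : w ∈ (⊥ : Submodule k k) := hfib ▸ hw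
    exact (Submodule.mem_bot k).1 hb
  fwd ℓ :=
    if ε ℓ = true then fiberMap k (SuppCond n i j ℓ) (SuppCond n i j (ℓ + 1)) else 0
  bwd ℓ :=
    if ε ℓ = true then 0 else fiberMap k (SuppCond n i j (ℓ + 1)) (SuppCond n i j ℓ)
  fwd_zero ℓ h := by simp [h]
  bwd_zero ℓ h := by simp [h]

/-- Direct sum of a list of representations. -/
def dsumList (k : Type) [Field k] (n : ℕ) (ε : ℕ → Bool) :
    List (ARep k n ε) → ARep k n ε
  | [] => zeroRep k n ε
  | M :: L => M.dsum (dsumList k n ε L)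

/-- Indecomposable representations. -/
def ARep.Indec (M : ARep k n ε) : Prop :=
  ¬M.IsZero ∧ ∀ A B : ARep k n ε, M.Iso (A.dsum B) → A.IsZero ∨ B.IsZero

/-- `A` is a direct summand of `T`. -/
def ARep.IsSummand (A T : ARep k n ε) : Prop := ∃ B : ARep k n ε, T.Iso (A.dsum B)

/-- A representation is basic when it has no repeated indecomposable direct summand. -/
def ARep.Basic (T : ARep k n ε) : Prop :=
  ∀ A : ARep k n ε, A.Indec → ¬(A.dsum A).IsSummand T

/-- A short exact sequence `0 → B → E → A → 0`. -/
structure SES (B A : ARep k n ε) where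
  E : ARep k n ε
  ι : B.Hom E
  π : E.Hom A
  inj : ∀ x, Function.Injective (ι.app x)
  surj : ∀ x, Function.Surjective (π.app x)
  exct : ∀ x (v : E.V x), π.app x v = 0 ↔ ∃ u, ι.app x u = v

/-- A short exact sequence splits. -/
def SES.Splits {B A : ARep k n ε} (σ : SES B A) : Prop :=
  ∃ r : σ.E.Hom B, ∀ x (v : B.V x), r.app x (σ.ι.app x v) = v

/-- `Ext¹(A, B) = 0` : every short exact sequence `0 → B → E → A → 0` splits. -/
def ExtZero (A B : ARep k n ε) : Prop := ∀ σ : SES B A, σ.Splits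

/-- `Ext¹(A,B) ≅ k`, generated by (the class of) a short exact sequence
`0 → B → E → A → 0` with indecomposable middle term `E`: there is a non-split such
sequence `σ` with `σ.E` indecomposable such that every non-split sequence is equivalent
to a nonzero scalar multiple of `σ`. -/
def ExtOneDimIndecMid (A B : ARep k n ε) : Prop :=
  ∃ σ : SES B A, ¬σ.Splits ∧ σ.E.Indec ∧
    ∀ τ : SES B A, ¬τ.Splits → ∃ c : k, c ≠ 0 ∧
      ∃ φ : σ.E.Hom τ.E, (∀ x, Function.Bijective (φ.app x)) ∧
        (∀ x (v : B.V x), φ.app x (σ.ι.app x v) = τ.ι.app x v) ∧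
        (∀ x (v : σ.E.V x), τ.π.app x (φ.app x v) = c • σ.π.app x v)

/-- Almost rigid representations. -/
def AlmostRigid (T : ARep k n ε) : Prop :=
  T.Basic ∧ ∀ A B : ARep k n ε, A.Indec → B.Indec → A.IsSummand T → B.IsSummand T →
    ExtZero A B ∨ ExtOneDimIndecMid A B

/-- Maximal almost rigid representations. -/
def MaxAlmostRigid (T : ARep k n ε) : Prop :=
  AlmostRigid T ∧ ∀ M : ARep k n ε, ¬M.IsZero → ¬AlmostRigid (T.dsum M)

/-- `f` is a section. -/
def ARep.Hom.IsSection {M N : ARep k n ε} (f : M.Hom N) : Prop :=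
  ∃ g : N.Hom M, ∀ x (v : M.V x), g.app x (f.app x v) = v

/-- `f` is a retraction. -/
def ARep.Hom.IsRetraction {M N : ARep k n ε} (f : M.Hom N) : Prop :=
  ∃ g : N.Hom M, ∀ x (v : N.V x), f.app x (g.app x v) = v

/-- Irreducible morphisms: `f` is neither a section nor a retraction, and in every
factorization `f = g ∘ h` either `h` is a section or `g` is a retraction. -/
def ARep.Hom.Irred {M N : ARep k n ε} (f : M.Hom N) : Prop :=
  ¬f.IsSection ∧ ¬f.IsRetraction ∧
    ∀ (Z : ARep k n ε) (h : M.Hom Z) (g : Z.Hom N),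
      (∀ x (v : M.V x), f.app x v = g.app x (h.app x v)) → h.IsSection ∨ g.IsRetraction

/-- Subrepresentations : families of subspaces closed under the structure maps. -/
structure Subrep (M : ARep k n ε) where
  U : ∀ x, Submodule k (M.V x)
  fwd_mem : ∀ i, ∀ v ∈ U i, M.fwd i v ∈ U (i + 1)
  bwd_mem : ∀ i, ∀ v ∈ U (i + 1), M.bwd i v ∈ U i

/-- The central charge `Z(M) = Σ_{x=1}^{n+2} dim_k(M_x) · (p_x − p_{x−1})`. -/
def charge (p : ℕ → ℂ) (M : ARep k n ε) : ℂ :=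
  ∑ x ∈ Finset.Icc 1 (n + 2), (Module.finrank k (M.V x) : ℂ) * (p x - p (x - 1))

/-- The central charge of a subrepresentation. -/
def subCharge (p : ℕ → ℂ) {M : ARep k n ε} (L : Subrep M) : ℂ :=
  ∑ x ∈ Finset.Icc 1 (n + 2), (Module.finrank k (L.U x) : ℂ) * (p x - p (x - 1))

/-- The representation `F(T) = ⊕_{γ(a,b) ∈ T} M(a+1, b)` attached to a collection `T` of
segments of the polygon `P(Q)`. -/
def FRep (k : Type) [Field k] (n : ℕ) (ε : ℕ → Bool) (T : Finset (ℕ × ℕ)) : ARep k n ε :=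
  dsumList k n ε (T.toList.map fun e => intervalRep k n ε (e.1 + 1) e.2)

end CambrianA

namespace CambrianA

/-! ### Combinatorics of triangulations -/
section Comb

/-- Two chords (in positions) interleave. -/
def crs (e f : ℕ × ℕ) : Prop :=
  (e.1 < f.1 ∧ f.1 < e.2 ∧ e.2 < f.2) ∨ (f.1 < e.1 ∧ e.1 < f.2 ∧ f.2 < e.2)

def InR (i j : ℕ) (e : ℕ × ℕ) : Prop := i ≤ e.1 ∧ e.1 < e.2 ∧ e.2 ≤ j

def MaxNC (i j : ℕ) (S : Finset (ℕ × ℕ)) : Prop :=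
  (∀ e ∈ S, InR i j e) ∧ (∀ e ∈ S, ∀ f ∈ S, ¬crs e f) ∧
    ∀ e, InR i j e → (∀ f ∈ S, ¬crs e f) → e ∈ S

def tset : BinaryTree Unit → ℕ → Finset (ℕ × ℕ)
  | .nil, i => {(i, i + 1)}
  | .node _ l r, i =>
    insert (i, i + (l.numNodes + r.numNodes + 1) + 1) (tset l i ∪ tset r (i + l.numNodes + 1))

theorem tset_top (t : BinaryTree Unit) (i : ℕ) : (i, i + t.numNodes + 1) ∈ tset t i := by
  cases t with
  | nil => simp [tset, BinaryTree.numNodes]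
  | node a l r => simp [tset, BinaryTree.numNodes]

theorem tset_max (t : BinaryTree Unit) : ∀ i, MaxNC i (i + t.numNodes + 1) (tset t i) := by
  induction t with
  | nil =>
    intro i
    refine ⟨?_, ?_, ?_⟩
    · intro e he
      simp only [tset, Finset.mem_singleton] at he
      subst he
      simp [InR, BinaryTree.numNodes]
    · intro e he f hf
      simp only [tset, Finset.mem_singleton] at he hf
      subst he hf
      simp [crs]
    · rintro ⟨a, b⟩ he _
      simp only [InR, BinaryTree.numNodes] at he
      simp only [tset, Finset.mem_singleton, Prod.mk.injEq]
      omega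
  | node a l r ihl ihr =>
    intro i
    obtain ⟨l1, l2, l3⟩ := ihl i
    obtain ⟨r1, r2, r3⟩ := ihr (i + l.numNodes + 1)
    have tl := tset_top l i
    have tr := tset_top r (i + l.numNodes + 1)
    refine ⟨?_, ?_, ?_⟩
    · intro e he
      simp only [tset, Finset.mem_insert, Finset.mem_union] at he
      rcases he with rfl | he | he
      · simp only [InR, BinaryTree.numNodes]; omega
      · have := l1 e he
        simp only [InR, BinaryTree.numNodes] at *; omega
      · have := r1 e he
        simp only [InR, BinaryTree.numNodes] at *; omega
    · intro e he f hf
      simp only [tset, Finset.mem_insert, Finset.mem_union] at he hf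
      rcases he with rfl | he | he <;> rcases hf with rfl | hf | hf
      · simp [crs]
      · have := l1 f hf
        simp only [InR, crs] at *; omega
      · have := r1 f hf
        simp only [InR, crs] at *; omega
      · have := l1 e he
        simp only [InR, crs] at *; omega
      · exact l2 e he f hf
      · have := l1 e he
        have := r1 f hf
        simp only [InR, crs] at *; omega
      · have := r1 e he
        simp only [InR, crs] at *; omega
      · have := r1 e he
        have := l1 f hf
        simp only [InR, crs] at *; omega
      · exact r2 e he f hf
    · intro e he hf
      simp only [tset, Finset.mem_insert, Finset.mem_union] at hf ⊢
      simp only [InR, BinaryTree.numNodes] at he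
      by_cases h1 : e.2 ≤ i + l.numNodes + 1
      · right; left
        exact l3 e ⟨he.1, he.2.1, h1⟩ (fun f h => hf f (Or.inr (Or.inl h)))
      by_cases h2 : i + l.numNodes + 1 ≤ e.1
      · right; right
        exact r3 e ⟨h2, he.2.1, by omega⟩ (fun f h => hf f (Or.inr (Or.inr h)))
      left
      have c1 := hf _ (Or.inr (Or.inl tl))
      have c2 := hf _ (Or.inr (Or.inr tr))
      simp only [crs] at c1 c2
      ext
      · simp only; omega
      · simp only; omega

theorem tset_surj (d : ℕ) : ∀ (i : ℕ) (S : Finset (ℕ × ℕ)), MaxNC i (i + d + 1) S →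
    ∃ t : BinaryTree Unit, t.numNodes = d ∧ tset t i = S := by
  induction d using Nat.strong_induction_on with
  | _ d ih =>
  intro i S hS
  obtain ⟨s1, s2, s3⟩ := hS
  have htop : (i, i + d + 1) ∈ S := by
    apply s3
    · simp only [InR]; omega
    · intro f hf
      have := s1 f hf
      simp only [InR, crs] at *; omega
  rcases Nat.eq_zero_or_pos d with rfl | hd
  · refine ⟨.nil, rfl, ?_⟩
    ext ⟨a, b⟩
    simp only [tset, Finset.mem_singleton, Prod.mk.injEq]
    constructor
    · rintro ⟨rfl, rfl⟩; exact htop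
    · intro h
      have := s1 _ h
      simp only [InR] at this; omega
  have hfirst : (i, i + 1) ∈ S := by
    apply s3
    · simp only [InR]; omega
    · intro f hf
      have := s1 f hf
      simp only [InR, crs] at *; omega
  let M := (Finset.range (i + d + 1)).filter (fun m => (i, m) ∈ S)
  have hM : M.Nonempty := ⟨i + 1, by simp [M, hfirst]; omega⟩
  obtain ⟨m, hmM, hmax⟩ := M.exists_max_image (fun x => x) hM
  have hm : m < i + d + 1 ∧ (i, m) ∈ S := by simpa [M] using hmM
  obtain ⟨hmlt, hmS⟩ := hm
  have him := s1 _ hmS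
  simp only [InR] at him
  have hmax' : ∀ x, (i, x) ∈ S → x < i + d + 1 → x ≤ m := by
    intro x hx hx'
    exact hmax x (by simp [M, hx]; omega)
  have hmj : (m, i + d + 1) ∈ S := by
    apply s3
    · simp only [InR]; omega
    · rintro ⟨a, b⟩ hf hc
      have h1 := s1 _ hf
      have h2 := s2 _ hf _ hmS
      simp only [InR, crs] at h1 h2 hc
      have ha : a = i := by omega
      subst ha
      have := hmax' b hf (by omega)
      omega
  have hsplit : ∀ e ∈ S, e = (i, i + d + 1) ∨ e.2 ≤ m ∨ m ≤ e.1 := by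
    rintro ⟨a, b⟩ he
    have h1 := s1 _ he
    have h2 := s2 _ he _ hmS
    simp only [InR, crs] at h1 h2
    by_contra hcon
    simp only [Prod.mk.injEq] at hcon
    have ha : a = i := by omega
    subst ha
    have := hmax' b he (by omega)
    omega
  obtain ⟨u, hu⟩ : ∃ u, m = i + u + 1 := ⟨m - i - 1, by omega⟩
  subst hu
  obtain ⟨v, hv⟩ : ∃ v, d = u + v + 1 := ⟨d - u - 1, by omega⟩
  subst hv
  obtain ⟨l, hl, hlS⟩ := ih u (by omega) i (S.filter fun e => e.2 ≤ i + u + 1) (by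
    refine ⟨?_, ?_, ?_⟩
    · intro e he
      simp only [Finset.mem_filter] at he
      have := s1 _ he.1
      simp only [InR] at *; omega
    · intro e he f hf
      simp only [Finset.mem_filter] at he hf
      exact s2 _ he.1 _ hf.1
    · intro e he hf
      simp only [Finset.mem_filter] at hf ⊢
      refine ⟨s3 e ?_ ?_, he.2.2⟩
      · simp only [InR] at *; omega
      · intro f hfS
        rcases hsplit f hfS with rfl | h | h
        · simp only [InR, crs] at *; omega
        · exact hf f ⟨hfS, h⟩
        · have := s1 _ hfS
          simp only [InR, crs] at *; omega)
  obtain ⟨r, hr, hrS⟩ := ih v (by omega) (i + u + 1) (S.filter fun e => i + u + 1 ≤ e.1) (by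
    refine ⟨?_, ?_, ?_⟩
    · intro e he
      simp only [Finset.mem_filter] at he
      have := s1 _ he.1
      simp only [InR] at *; omega
    · intro e he f hf
      simp only [Finset.mem_filter] at he hf
      exact s2 _ he.1 _ hf.1
    · intro e he hf
      simp only [Finset.mem_filter] at hf ⊢
      refine ⟨s3 e ?_ ?_, he.1⟩
      · simp only [InR] at *; omega
      · intro f hfS
        rcases hsplit f hfS with rfl | h | h
        · simp only [InR, crs] at *; omega
        · have := s1 _ hfS
          simp only [InR, crs] at *; omega
        · exact hf f ⟨hfS, h⟩)
  refine ⟨.node () l r, by simp [BinaryTree.numNodes, hl, hr], ?_⟩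
  simp only [tset, hl, hr]
  rw [hlS, hrS]
  ext e
  simp only [Finset.mem_insert, Finset.mem_union, Finset.mem_filter]
  constructor
  · rintro (rfl | h | h)
    · exact htop
    · exact h.1
    · exact h.1
  · intro h
    rcases hsplit e h with h1 | h1 | h1
    · exact Or.inl h1
    · exact Or.inr (Or.inl ⟨h, h1⟩)
    · exact Or.inr (Or.inr ⟨h, h1⟩)

theorem tset_left (l r : BinaryTree Unit) (i : ℕ) :
    tset l i = (tset (.node () l r) i).filter fun e => e.2 ≤ i + l.numNodes + 1 := by
  ext e
  simp only [tset, Finset.mem_filter, Finset.mem_insert, Finset.mem_union]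
  constructor
  · intro h
    exact ⟨Or.inr (Or.inl h), ((tset_max l i).1 e h).2.2⟩
  · rintro ⟨rfl | h | h, h'⟩
    · simp only at h'; omega
    · exact h
    · have := (tset_max r _).1 e h
      simp only [InR] at this; omega

theorem tset_right (l r : BinaryTree Unit) (i : ℕ) :
    tset r (i + l.numNodes + 1) =
      (tset (.node () l r) i).filter fun e => i + l.numNodes + 1 ≤ e.1 := by
  ext e
  simp only [tset, Finset.mem_filter, Finset.mem_insert, Finset.mem_union]
  constructor
  · intro h
    exact ⟨Or.inr (Or.inr h), ((tset_max r _).1 e h).1⟩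
  · rintro ⟨rfl | h | h, h'⟩
    · simp only at h'; omega
    · have := (tset_max l _).1 e h
      simp only [InR] at this; omega
    · exact h

theorem tset_inj (t : BinaryTree Unit) : ∀ (t' : BinaryTree Unit) (i : ℕ), t.numNodes = t'.numNodes →
    tset t i = tset t' i → t = t' := by
  induction t with
  | nil =>
    intro t' i hn _
    cases t' with
    | nil => rfl
    | node a l r => simp [BinaryTree.numNodes] at hn
  | node a l r ihl ihr =>
    intro t' i hn h
    cases t' with
    | nil => simp [BinaryTree.numNodes] at hn
    | node a' l' r' =>
      simp only [BinaryTree.numNodes] at hn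
      have h1 : (i, i + l.numNodes + 1) ∈ tset (.node a l r) i := by
        simp [tset, tset_top]
      have h2 : (i + l.numNodes + 1, i + l.numNodes + 1 + r.numNodes + 1)
          ∈ tset (.node a l r) i := by
        simp only [tset, Finset.mem_insert, Finset.mem_union]
        exact Or.inr (Or.inr (tset_top _ _))
      have h1' : (i, i + l'.numNodes + 1) ∈ tset (.node a' l' r') i := by
        simp [tset, tset_top]
      have h2' : (i + l'.numNodes + 1, i + l'.numNodes + 1 + r'.numNodes + 1)
          ∈ tset (.node a' l' r') i := by
        simp only [tset, Finset.mem_insert, Finset.mem_union]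
        exact Or.inr (Or.inr (tset_top _ _))
      have c1 := (tset_max (.node a l r) i).2.1 _ h2 _ (h ▸ h1')
      have c2 := (tset_max (.node a' l' r') i).2.1 _ h2' _ (h ▸ h1)
      simp only [crs] at c1 c2
      have hl : l.numNodes = l'.numNodes := by omega
      have hr : r.numNodes = r'.numNodes := by omega
      have e1 : l = l' := by
        apply ihl l' i hl
        rw [tset_left l r i, tset_left l' r' i, ← hl]
        exact congrArg _ h
      have e2 : r = r' := by
        apply ihr r' (i + l.numNodes + 1) hr
        rw [tset_right l r i]
        conv_rhs => rw [hl, tset_right l' r' i]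
        rw [← hl]
        exact congrArg _ h
      rw [e1, e2]

/-- vertex `x` is upper. -/
def upp (n : ℕ) (ε : ℕ → Bool) (x : ℕ) : Prop := 1 ≤ x ∧ x ≤ n + 1 ∧ ε x = true

/-- strict total order on polygon vertices: counterclockwise from `0`. -/
def vlt (n : ℕ) (ε : ℕ → Bool) (x y : ℕ) : Prop :=
  (¬upp n ε x ∧ (upp n ε y ∨ x < y)) ∨ (upp n ε x ∧ upp n ε y ∧ y < x)

def vpos (n : ℕ) (ε : ℕ → Bool) (x : ℕ) : ℕ :=
  ((Finset.range (n + 3)).filter fun y => vlt n ε y x).card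

theorem vlt_trans {n ε x y z} (h : vlt n ε x y) (h' : vlt n ε y z) : vlt n ε x z := by
  unfold vlt at *
  by_cases hx : upp n ε x <;> by_cases hy : upp n ε y <;> by_cases hz : upp n ε z <;>
    simp only [hx, hy, hz] at * <;> simp at * <;> omega

theorem vlt_irrefl {n ε x} : ¬ vlt n ε x x := by
  unfold vlt; by_cases hx : upp n ε x <;> simp [hx]

theorem vlt_total {n ε x y} (h : x ≠ y) : vlt n ε x y ∨ vlt n ε y x := by
  unfold vlt
  by_cases hx : upp n ε x <;> by_cases hy : upp n ε y <;> simp [hx, hy] <;> omega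

theorem vpos_lt {n ε x y} (hx : x ≤ n + 2) (h : vlt n ε x y) : vpos n ε x < vpos n ε y := by
  apply Finset.card_lt_card
  rw [Finset.ssubset_iff_of_subset]
  · refine ⟨x, ?_, ?_⟩
    · simp only [Finset.mem_filter, Finset.mem_range]; exact ⟨by omega, h⟩
    · simp [vlt_irrefl]
  · intro z hz
    simp only [Finset.mem_filter] at hz ⊢
    exact ⟨hz.1, vlt_trans hz.2 h⟩

theorem vpos_lt_iff {n ε x y} (hx : x ≤ n + 2) (hy : y ≤ n + 2) :
    vpos n ε x < vpos n ε y ↔ vlt n ε x y := by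
  refine ⟨fun h => ?_, vpos_lt hx⟩
  by_contra hc
  have hne : x ≠ y := by rintro rfl; omega
  have := vpos_lt hy ((vlt_total hne).resolve_left hc)
  omega

theorem vpos_inj {n ε x y} (hx : x ≤ n + 2) (hy : y ≤ n + 2)
    (h : vpos n ε x = vpos n ε y) : x = y := by
  by_contra hne
  rcases vlt_total (n := n) (ε := ε) hne with h' | h'
  · have := vpos_lt hx h'; omega
  · have := vpos_lt hy h'; omega

theorem vpos_le {n ε x} (hx : x ≤ n + 2) : vpos n ε x ≤ n + 2 := by
  have : vpos n ε x < (Finset.range (n + 3)).card := by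
    apply Finset.card_lt_card
    rw [Finset.ssubset_iff_of_subset (Finset.filter_subset _ _)]
    exact ⟨x, by simp; omega, by simp [vlt_irrefl]⟩
  rw [Finset.card_range] at this
  omega

theorem vpos_surj {n ε} (y : ℕ) (hy : y ≤ n + 2) : ∃ x ≤ n + 2, vpos n ε x = y := by
  have himg : (Finset.range (n + 3)).image (vpos n ε) = Finset.range (n + 3) := by
    apply Finset.eq_of_subset_of_card_le
    · intro z hz
      simp only [Finset.mem_image, Finset.mem_range] at hz ⊢
      obtain ⟨x, hx, rfl⟩ := hz
      have := vpos_le (n := n) (ε := ε) (x := x) (by omega)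
      omega
    · rw [Finset.card_image_of_injOn]
      intro a ha b hb h
      simp only [Finset.coe_range, Set.mem_Iio] at ha hb
      exact vpos_inj (by omega) (by omega) h
  have : y ∈ (Finset.range (n + 3)).image (vpos n ε) := by rw [himg]; simp; omega
  simp only [Finset.mem_image, Finset.mem_range] at this
  obtain ⟨x, hx, rfl⟩ := this
  exact ⟨x, by omega, rfl⟩

/-- the chord of positions of a segment -/
def chord (n : ℕ) (ε : ℕ → Bool) (e : ℕ × ℕ) : ℕ × ℕ :=
  (min (vpos n ε e.1) (vpos n ε e.2), max (vpos n ε e.1) (vpos n ε e.2))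

/-- overlap extension of `M(e)` by `M(f)`. -/
def Ovl (ε : ℕ → Bool) (e f : ℕ × ℕ) : Prop :=
  max e.1 f.1 < min e.2 f.2 ∧
  ((e.1 < f.1 ∧ ε f.1 = true) ∨ (f.1 < e.1 ∧ ε e.1 = false)) ∧
  ((e.2 < f.2 ∧ ε e.2 = true) ∨ (f.2 < e.2 ∧ ε f.2 = false))

theorem chord_inR {n ε e} (he : ValidPair n e) : InR 0 (n + 2) (chord n ε e) := by
  obtain ⟨h1, h2⟩ := he
  have a := vpos_le (n := n) (ε := ε) (x := e.1) (by omega)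
  have b := vpos_le (n := n) (ε := ε) (x := e.2) (by omega)
  have c : vpos n ε e.1 ≠ vpos n ε e.2 := fun h => by
    have := vpos_inj (by omega) (by omega) h; omega
  simp only [InR, chord]
  omega

theorem chord_inj {n ε e f} (he : ValidPair n e) (hf : ValidPair n f)
    (h : chord n ε e = chord n ε f) : e = f := by
  obtain ⟨h1, h2⟩ := he
  obtain ⟨h3, h4⟩ := hf
  simp only [chord, Prod.mk.injEq] at h
  rcases (by omega : (vpos n ε e.1 = vpos n ε f.1 ∧ vpos n ε e.2 = vpos n ε f.2) ∨
    (vpos n ε e.1 = vpos n ε f.2 ∧ vpos n ε e.2 = vpos n ε f.1)) with ⟨a, b⟩ | ⟨a, b⟩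
  · have := vpos_inj (by omega) (by omega) a
    have := vpos_inj (by omega) (by omega) b
    ext <;> assumption
  · have := vpos_inj (by omega) (by omega) a
    have := vpos_inj (by omega) (by omega) b
    omega

theorem chord_surj {n ε} (c : ℕ × ℕ) (hc : InR 0 (n + 2) c) :
    ∃ e, ValidPair n e ∧ chord n ε e = c := by
  obtain ⟨x, hx, hx'⟩ := vpos_surj (n := n) (ε := ε) c.1 (by simp only [InR] at hc; omega)
  obtain ⟨y, hy, hy'⟩ := vpos_surj (n := n) (ε := ε) c.2 (by simp only [InR] at hc; omega)
  have hne : x ≠ y := by rintro rfl; simp only [InR] at hc; omega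
  simp only [InR] at hc
  refine ⟨(min x y, max x y), by simp only [ValidPair]; omega, ?_⟩
  rcases lt_or_gt_of_ne hne with h | h
  · have e1 : min x y = x := by omega
    have e2 : max x y = y := by omega
    simp only [chord, e1, e2, hx', hy']
    ext <;> simp only <;> omega
  · have e1 : min x y = y := by omega
    have e2 : max x y = x := by omega
    simp only [chord, e1, e2, hx', hy']
    ext <;> simp only <;> omega

/-- an explicit numerical model of the vertex order -/
def qpos (n : ℕ) (ε : ℕ → Bool) (x : ℕ) : ℕ := if upp n ε x then 2 * n + 10 - x else x

theorem vpos_lt_iff' {n ε x y} (hx : x ≤ n + 2) (hy : y ≤ n + 2) :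
    vpos n ε x < vpos n ε y ↔ qpos n ε x < qpos n ε y := by
  rw [vpos_lt_iff hx hy]
  unfold vlt qpos
  by_cases h : upp n ε x <;> by_cases h' : upp n ε y <;> simp [h, h'] <;> omega

theorem crs_mono {A B C D A' B' C' D' : ℕ}
    (hab : A < B ↔ A' < B') (_hba : B < A ↔ B' < A') (hac : A < C ↔ A' < C') (hca : C < A ↔ C' < A')
    (had : A < D ↔ A' < D') (hda : D < A ↔ D' < A') (hbc : B < C ↔ B' < C') (hcb : C < B ↔ C' < B')
    (hbd : B < D ↔ B' < D') (hdb : D < B ↔ D' < B') (hcd : C < D ↔ C' < D')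
    (_hdc : D < C ↔ D' < C') :
    crs (min A B, max A B) (min C D, max C D) ↔
      crs (min A' B', max A' B') (min C' D', max C' D') := by
  rcases le_or_gt B A with h | h <;> rcases le_or_gt D C with h' | h'
  · rw [min_eq_right h, max_eq_left h, min_eq_right h', max_eq_left h',
      min_eq_right (not_lt.1 (mt hab.2 (not_lt.2 h))), max_eq_left (not_lt.1 (mt hab.2 (not_lt.2 h))),
      min_eq_right (not_lt.1 (mt hcd.2 (not_lt.2 h'))),
      max_eq_left (not_lt.1 (mt hcd.2 (not_lt.2 h')))]
    simp only [crs, *]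
  · rw [min_eq_right h, max_eq_left h, min_eq_left h'.le, max_eq_right h'.le,
      min_eq_right (not_lt.1 (mt hab.2 (not_lt.2 h))), max_eq_left (not_lt.1 (mt hab.2 (not_lt.2 h))),
      min_eq_left (hcd.1 h').le, max_eq_right (hcd.1 h').le]
    simp only [crs, *]
  · rw [min_eq_left h.le, max_eq_right h.le, min_eq_right h', max_eq_left h',
      min_eq_left (hab.1 h).le, max_eq_right (hab.1 h).le,
      min_eq_right (not_lt.1 (mt hcd.2 (not_lt.2 h'))),
      max_eq_left (not_lt.1 (mt hcd.2 (not_lt.2 h')))]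
    simp only [crs, *]
  · rw [min_eq_left h.le, max_eq_right h.le, min_eq_left h'.le, max_eq_right h'.le,
      min_eq_left (hab.1 h).le, max_eq_right (hab.1 h).le,
      min_eq_left (hcd.1 h').le, max_eq_right (hcd.1 h').le]
    simp only [crs, *]

set_option maxHeartbeats 4000000 in
theorem ovl_iff {n ε e f} (he : ValidPair n e) (hf : ValidPair n f) :
    (Ovl ε e f ∨ Ovl ε f e) ↔ crs (chord n ε e) (chord n ε f) := by
  obtain ⟨a, b⟩ := e
  obtain ⟨c, d⟩ := f
  obtain ⟨h1, h2⟩ := he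
  obtain ⟨h3, h4⟩ := hf
  simp only at h1 h2 h3 h4
  have K : ∀ x y, x ≤ n + 2 → y ≤ n + 2 →
    (vpos n ε x < vpos n ε y ↔ qpos n ε x < qpos n ε y) := fun x y hx hy => vpos_lt_iff' hx hy
  have hM := crs_mono (K a b (by omega) (by omega)) (K b a (by omega) (by omega))
    (K a c (by omega) (by omega)) (K c a (by omega) (by omega))
    (K a d (by omega) (by omega)) (K d a (by omega) (by omega))
    (K b c (by omega) (by omega)) (K c b (by omega) (by omega))
    (K b d (by omega) (by omega)) (K d b (by omega) (by omega))
    (K c d (by omega) (by omega)) (K d c (by omega) (by omega))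
  simp only [chord]
  rw [hM]
  clear hM K
  have q1 : a = c → ε a = ε c := fun h => by rw [h]
  have q2 : a = d → ε a = ε d := fun h => by rw [h]
  have q3 : b = c → ε b = ε c := fun h => by rw [h]
  have q4 : b = d → ε b = ε d := fun h => by rw [h]
  simp only [Ovl, qpos, upp]
  rcases Bool.eq_false_or_eq_true (ε a) with ha' | ha' <;>
  rcases Bool.eq_false_or_eq_true (ε b) with hb' | hb' <;>
  rcases Bool.eq_false_or_eq_true (ε c) with hc' | hc' <;>
  rcases Bool.eq_false_or_eq_true (ε d) with hd' | hd' <;>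
    simp only [ha', hb', hc', hd', and_true, and_false, false_and, true_and, reduceCtorEq,
      false_or, or_false, if_false, imp_false, imp_true_iff] at q1 q2 q3 q4 ⊢ <;>
    (try split_ifs) <;> simp only [crs] <;> first | omega | (rw [false_iff]; rintro (h | h) <;>
      simp only [lt_min_iff, max_lt_iff, min_lt_iff, lt_max_iff] at h <;> omega)

end Comb
end CambrianA

namespace CambrianA
section Comb2

/-- maximal collections of segments without overlap extensions -/
def MaxV (n : ℕ) (ε : ℕ → Bool) (S : Finset (ℕ × ℕ)) : Prop :=
  (∀ e ∈ S, ValidPair n e) ∧ (∀ e ∈ S, ∀ f ∈ S, ¬Ovl ε e f) ∧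
    ∀ e, ValidPair n e → (∀ f ∈ S, ¬Ovl ε e f ∧ ¬Ovl ε f e) → e ∈ S

def pullS (n : ℕ) (ε : ℕ → Bool) (C : Finset (ℕ × ℕ)) : Finset (ℕ × ℕ) :=
  (Finset.range (n + 3) ×ˢ Finset.range (n + 3)).filter
    fun e => ValidPair n e ∧ chord n ε e ∈ C

theorem mem_pullS {n ε C e} : e ∈ pullS n ε C ↔ ValidPair n e ∧ chord n ε e ∈ C := by
  rw [pullS, Finset.mem_filter, Finset.mem_product, Finset.mem_range, Finset.mem_range]
  constructor
  · exact fun h => h.2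
  · intro h
    have := h.1
    simp only [ValidPair] at this
    exact ⟨by omega, h⟩

theorem pullS_max {n ε C} (hC : MaxNC 0 (n + 2) C) : MaxV n ε (pullS n ε C) := by
  obtain ⟨c1, c2, c3⟩ := hC
  refine ⟨fun e he => (mem_pullS.1 he).1, ?_, ?_⟩
  · intro e he f hf ho
    rw [mem_pullS] at he hf
    exact c2 _ he.2 _ hf.2 ((ovl_iff he.1 hf.1).1 (Or.inl ho))
  · intro e he hf
    rw [mem_pullS]
    refine ⟨he, c3 _ (chord_inR he) ?_⟩
    intro c hc hcr
    obtain ⟨f, hfv, rfl⟩ := chord_surj (ε := ε) c (c1 c hc)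
    have := hf f (mem_pullS.2 ⟨hfv, hc⟩)
    rcases (ovl_iff he hfv).2 hcr with h | h
    · exact this.1 h
    · exact this.2 h

theorem pullS_surj {n ε S} (hS : MaxV n ε S) : ∃ C, MaxNC 0 (n + 2) C ∧ pullS n ε C = S := by
  obtain ⟨s1, s2, s3⟩ := hS
  refine ⟨S.image (chord n ε), ⟨?_, ?_, ?_⟩, ?_⟩
  · intro c hc
    obtain ⟨e, he, rfl⟩ := Finset.mem_image.1 hc
    exact chord_inR (s1 e he)
  · intro c hc c' hc' hcr
    obtain ⟨e, he, rfl⟩ := Finset.mem_image.1 hc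
    obtain ⟨f, hf, rfl⟩ := Finset.mem_image.1 hc'
    rcases (ovl_iff (s1 e he) (s1 f hf)).2 hcr with h | h
    · exact s2 _ he _ hf h
    · exact s2 _ hf _ he h
  · intro c hc hcr
    obtain ⟨e, he, rfl⟩ := chord_surj (ε := ε) c hc
    apply Finset.mem_image_of_mem
    apply s3 e he
    intro f hf
    have := hcr _ (Finset.mem_image_of_mem _ hf)
    rw [← ovl_iff he (s1 f hf)] at this
    tauto
  · ext e
    rw [mem_pullS]
    constructor
    · rintro ⟨he, hc⟩
      obtain ⟨f, hf, h⟩ := Finset.mem_image.1 hc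
      rwa [← chord_inj (s1 f hf) he h]
    · intro he
      exact ⟨s1 e he, Finset.mem_image_of_mem _ he⟩

theorem pullS_inj {n ε C C'} (hC : MaxNC 0 (n + 2) C) (hC' : MaxNC 0 (n + 2) C')
    (h : pullS n ε C = pullS n ε C') : C = C' := by
  ext c
  constructor
  · intro hc
    obtain ⟨e, he, rfl⟩ := chord_surj (ε := ε) c (hC.1 c hc)
    have : e ∈ pullS n ε C := mem_pullS.2 ⟨he, hc⟩
    rw [h, mem_pullS] at this
    exact this.2
  · intro hc
    obtain ⟨e, he, rfl⟩ := chord_surj (ε := ε) c (hC'.1 c hc)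
    have : e ∈ pullS n ε C' := mem_pullS.2 ⟨he, hc⟩
    rw [← h, mem_pullS] at this
    exact this.2

theorem comb_main (n : ℕ) (ε : ℕ → Bool) : ∃ L : List (Finset (ℕ × ℕ)),
    L.length = (2 * n + 2).choose (n + 1) / (n + 2) ∧ L.Nodup ∧ ∀ S, S ∈ L ↔ MaxV n ε S := by
  have key : ∀ t : BinaryTree Unit, t.numNodes = n + 1 → MaxNC 0 (n + 2) (tset t 0) := by
    intro t ht
    have := tset_max t 0
    rwa [ht, Nat.zero_add] at this
  refine ⟨(BinaryTree.treesOfNumNodesEq (n + 1)).toList.map fun t => pullS n ε (tset t 0),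
    ?_, ?_, ?_⟩
  · rw [List.length_map, Finset.length_toList, BinaryTree.treesOfNumNodesEq_card_eq_catalan,
      catalan_eq_centralBinom_div, Nat.centralBinom]
    rfl
  · refine List.Nodup.map_on ?_ (Finset.nodup_toList _)
    intro t ht t' ht' h
    rw [Finset.mem_toList, BinaryTree.mem_treesOfNumNodesEq] at ht ht'
    exact tset_inj t t' 0 (ht.trans ht'.symm) (pullS_inj (key t ht) (key t' ht') h)
  · intro S
    simp only [List.mem_map, Finset.mem_toList, BinaryTree.mem_treesOfNumNodesEq]
    constructor
    · rintro ⟨t, ht, rfl⟩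
      exact pullS_max (key t ht)
    · intro hS
      obtain ⟨C, hC, rfl⟩ := pullS_surj hS
      obtain ⟨t, ht, rfl⟩ := tset_surj (n + 1) 0 C (by rwa [Nat.zero_add])
      exact ⟨t, ht, rfl⟩

end Comb2
end CambrianA

namespace CambrianA
section PartB
variable {k : Type} [Field k] {n : ℕ} {ε : ℕ → Bool}

/-- inverse of a bijective morphism -/
def invHom {M N : ARep k n ε} (f : M.Hom N) (h : ∀ x, Function.Bijective (f.app x)) : N.Hom M where
  app x := ((LinearEquiv.ofBijective (f.app x) (h x)).symm : N.V x →ₗ[k] M.V x)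
  comm_fwd i v := by
    apply (h (i + 1)).1
    rw [f.comm_fwd]
    have e1 := (LinearEquiv.ofBijective (f.app (i+1)) (h (i+1))).apply_symm_apply (N.fwd i v)
    have e2 := (LinearEquiv.ofBijective (f.app i) (h i)).apply_symm_apply v
    simp only [LinearEquiv.ofBijective_apply] at e1 e2
    exact e1.trans (by rw [LinearEquiv.coe_coe, e2])
  comm_bwd i v := by
    apply (h i).1
    rw [f.comm_bwd]
    have e1 := (LinearEquiv.ofBijective (f.app i) (h i)).apply_symm_apply (N.bwd i v)
    have e2 := (LinearEquiv.ofBijective (f.app (i+1)) (h (i+1))).apply_symm_apply v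
    simp only [LinearEquiv.ofBijective_apply] at e1 e2
    exact e1.trans (by rw [LinearEquiv.coe_coe, e2])

theorem invHom_right {M N : ARep k n ε} (f : M.Hom N) (h : ∀ x, Function.Bijective (f.app x))
    (x) (v : N.V x) : f.app x ((invHom f h).app x v) = v :=
  (LinearEquiv.ofBijective (f.app x) (h x)).apply_symm_apply v

theorem invHom_left {M N : ARep k n ε} (f : M.Hom N) (h : ∀ x, Function.Bijective (f.app x))
    (x) (v : M.V x) : (invHom f h).app x (f.app x v) = v :=
  (LinearEquiv.ofBijective (f.app x) (h x)).symm_apply_apply v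

theorem bij_of_inv {M N : ARep k n ε} (f : M.Hom N) (g : N.Hom M)
    (h1 : ∀ x v, g.app x (f.app x v) = v) (h2 : ∀ x v, f.app x (g.app x v) = v) :
    ∀ x, Function.Bijective (f.app x) := fun x =>
  ⟨Function.LeftInverse.injective (h1 x), Function.RightInverse.surjective (h2 x)⟩

theorem iso_refl (M : ARep k n ε) : M.Iso M := ⟨ARep.Hom.id M, fun _ => Function.bijective_id⟩

theorem iso_symm {M N : ARep k n ε} (h : M.Iso N) : N.Iso M := by
  obtain ⟨f, hf⟩ := h
  exact ⟨invHom f hf, bij_of_inv _ f (invHom_right f hf) (invHom_left f hf)⟩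

theorem iso_trans {M N P : ARep k n ε} (h : M.Iso N) (h' : N.Iso P) : M.Iso P := by
  obtain ⟨f, hf⟩ := h
  obtain ⟨g, hg⟩ := h'
  exact ⟨g.comp f, fun x => (hg x).comp (hf x)⟩

/-- `A` is a retract of `T` -/
def Ret (A T : ARep k n ε) : Prop :=
  ∃ (f : A.Hom T) (g : T.Hom A), ∀ x v, g.app x (f.app x v) = v

theorem iso_ret {M N : ARep k n ε} (h : M.Iso N) : Ret M N := by
  obtain ⟨f, hf⟩ := h
  exact ⟨f, invHom f hf, invHom_left f hf⟩

theorem ret_trans {A B C : ARep k n ε} (h : Ret A B) (h' : Ret B C) : Ret A C := by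
  obtain ⟨f, g, hfg⟩ := h
  obtain ⟨f', g', hfg'⟩ := h'
  refine ⟨f'.comp f, g.comp g', fun x v => ?_⟩
  show g.app x (g'.app x (f'.app x (f.app x v))) = v
  rw [hfg', hfg]

/-- pairing of homs into a direct sum -/
def pairHom {A B C : ARep k n ε} (f : A.Hom B) (g : A.Hom C) : A.Hom (B.dsum C) where
  app x := (f.app x).prod (g.app x)
  comm_fwd i v := Prod.ext (f.comm_fwd i v) (g.comm_fwd i v)
  comm_bwd i v := Prod.ext (f.comm_bwd i v) (g.comm_bwd i v)

def fstHom (B C : ARep k n ε) : (B.dsum C).Hom B where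
  app x := LinearMap.fst k (B.V x) (C.V x)
  comm_fwd _ _ := rfl
  comm_bwd _ _ := rfl

def sndHom (B C : ARep k n ε) : (B.dsum C).Hom C where
  app x := LinearMap.snd k (B.V x) (C.V x)
  comm_fwd _ _ := rfl
  comm_bwd _ _ := rfl

def zeroHom (B C : ARep k n ε) : B.Hom C where
  app _ := 0
  comm_fwd _ _ := by simp
  comm_bwd _ _ := by simp

def inlHom (B C : ARep k n ε) : B.Hom (B.dsum C) := pairHom (ARep.Hom.id B) (zeroHom B C)
def inrHom (B C : ARep k n ε) : C.Hom (B.dsum C) := pairHom (zeroHom C B) (ARep.Hom.id C)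

theorem ret_inl (B C : ARep k n ε) : Ret B (B.dsum C) :=
  ⟨inlHom B C, fstHom B C, fun _ _ => rfl⟩

theorem ret_inr (B C : ARep k n ε) : Ret C (B.dsum C) :=
  ⟨inrHom B C, sndHom B C, fun _ _ => rfl⟩

def mapHom {A B A' B' : ARep k n ε} (f : A.Hom A') (g : B.Hom B') : (A.dsum B).Hom (A'.dsum B') :=
  pairHom (f.comp (fstHom A B)) (g.comp (sndHom A B))

theorem ret_dsum {A B A' B' : ARep k n ε} (h : Ret A A') (h' : Ret B B') :
    Ret (A.dsum B) (A'.dsum B') := by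
  obtain ⟨f, g, hfg⟩ := h
  obtain ⟨f', g', hfg'⟩ := h'
  exact ⟨mapHom f f', mapHom g g', fun x v => Prod.ext (hfg x v.1) (hfg' x v.2)⟩

theorem iso_dsum {A B A' B' : ARep k n ε} (h : A.Iso A') (h' : B.Iso B') :
    (A.dsum B).Iso (A'.dsum B') := by
  obtain ⟨f, hf⟩ := h
  obtain ⟨f', hf'⟩ := h'
  refine ⟨mapHom f f', bij_of_inv _ (mapHom (invHom f hf) (invHom f' hf')) ?_ ?_⟩
  · exact fun x v => Prod.ext (invHom_left f hf x v.1) (invHom_left f' hf' x v.2)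
  · exact fun x v => Prod.ext (invHom_right f hf x v.1) (invHom_right f' hf' x v.2)

theorem iso_comm (A B : ARep k n ε) : (A.dsum B).Iso (B.dsum A) :=
  ⟨pairHom (sndHom A B) (fstHom A B), bij_of_inv _ (pairHom (sndHom B A) (fstHom B A))
    (fun _ _ => rfl) (fun _ _ => rfl)⟩

/-- kernel representation -/
def kerRep {M N : ARep k n ε} (g : M.Hom N) : ARep k n ε where
  V x := ↥(LinearMap.ker (g.app x))
  acg _ := by infer_instance
  mod _ := by infer_instance
  fdim _ := by infer_instance
  triv x hx v := Subtype.ext (M.triv x hx v.1)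
  fwd i := ((M.fwd i).comp (LinearMap.ker (g.app i)).subtype).codRestrict (LinearMap.ker (g.app (i + 1))) (by
    rintro ⟨v, hv⟩
    rw [LinearMap.mem_ker] at hv ⊢
    simp [g.comm_fwd, hv])
  bwd i := ((M.bwd i).comp (LinearMap.ker (g.app (i+1))).subtype).codRestrict (LinearMap.ker (g.app i)) (by
    rintro ⟨v, hv⟩
    rw [LinearMap.mem_ker] at hv ⊢
    simp [g.comm_bwd, hv])
  fwd_zero i h := by
    ext v; simp [M.fwd_zero i h]
  bwd_zero i h := by
    ext v; simp [M.bwd_zero i h]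

theorem ret_iso {A T : ARep k n ε} (f : A.Hom T) (g : T.Hom A)
    (h : ∀ x v, g.app x (f.app x v) = v) : T.Iso (A.dsum (kerRep g)) := by
  let P : ∀ x, T.V x →ₗ[k] ↥(LinearMap.ker (g.app x)) := fun x =>
    (LinearMap.id - (f.app x).comp (g.app x)).codRestrict (LinearMap.ker (g.app x)) (by
        intro v; rw [LinearMap.mem_ker]; simp [h])
  let p : T.Hom (kerRep g) :=
    { app := P
      comm_fwd := fun i v => by
        apply Subtype.ext
        show T.fwd i v - f.app (i+1) (g.app (i+1) (T.fwd i v)) =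
          T.fwd i (v - f.app i (g.app i v))
        rw [map_sub, g.comm_fwd, f.comm_fwd]
      comm_bwd := fun i v => by
        apply Subtype.ext
        show T.bwd i v - f.app i (g.app i (T.bwd i v)) =
          T.bwd i (v - f.app (i+1) (g.app (i+1) v))
        rw [map_sub, g.comm_bwd, f.comm_bwd] }
  refine ⟨pairHom g p, fun x => ⟨?_, ?_⟩⟩
  · intro v w hvw
    have h1 : g.app x v = g.app x w := congrArg Prod.fst hvw
    have h2 : v - f.app x (g.app x v) = w - f.app x (g.app x w) :=
      congrArg Subtype.val (congrArg Prod.snd hvw)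
    rw [h1] at h2
    exact sub_left_injective h2
  · rintro ⟨a, ⟨b, hb⟩⟩
    rw [LinearMap.mem_ker] at hb
    refine ⟨f.app x a + b, Prod.ext ?_ (Subtype.ext ?_)⟩
    · show g.app x (f.app x a + b) = a
      rw [map_add, h, hb, add_zero]
    · show (f.app x a + b) - f.app x (g.app x (f.app x a + b)) = b
      rw [map_add, h, hb, add_zero, add_sub_cancel_left]

theorem summand_iff_ret {A T : ARep k n ε} : A.IsSummand T ↔ Ret A T := by
  constructor
  · rintro ⟨B, hB⟩
    exact ret_trans (ret_inl A B) (iso_ret (iso_symm hB))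
  · rintro ⟨f, g, h⟩
    exact ⟨kerRep g, ret_iso f g h⟩

theorem indec_iso {A B : ARep k n ε} (h : A.Iso B) (hA : A.Indec) : B.Indec := by
  refine ⟨fun hz => hA.1 ?_, fun C D hCD => hA.2 C D (iso_trans h hCD)⟩
  obtain ⟨f, hf⟩ := h
  intro x v
  apply (hf x).1
  rw [hz x (f.app x v), map_zero]

/-- sublists give retracts -/
theorem ret_sublist {L1 L2 : List (ARep k n ε)} (h : L1.Sublist L2) :
    Ret (dsumList k n ε L1) (dsumList k n ε L2) := by
  induction h with
  | slnil => exact iso_ret (iso_refl _)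
  | cons a _ ih => exact ret_trans ih (ret_inr _ _)
  | cons_cons a _ ih => exact ret_dsum (iso_ret (iso_refl _)) ih

theorem ret_mem {A : ARep k n ε} {L : List (ARep k n ε)} (h : A ∈ L) :
    Ret A (dsumList k n ε L) :=
  ret_trans (ret_inl _ _) (ret_sublist (L1 := [A]) (List.singleton_sublist.2 h))

/-- the compatibility condition in the definition of almost rigid -/
def Cmp (A B : ARep k n ε) : Prop := ExtZero A B ∨ ExtOneDimIndecMid A B

/-- transport of short exact sequences -/
def sesMap {A B A' B' : ARep k n ε} (β : B'.Hom B) (hβ : ∀ x, Function.Bijective (β.app x))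
    (α : A.Hom A') (hα : ∀ x, Function.Bijective (α.app x)) (σ : SES B A) : SES B' A' where
  E := σ.E
  ι := σ.ι.comp β
  π := α.comp σ.π
  inj x := (σ.inj x).comp (hβ x).1
  surj x := (hα x).2.comp (σ.surj x)
  exct x v := by
    show α.app x (σ.π.app x v) = 0 ↔ ∃ u, σ.ι.app x (β.app x u) = v
    rw [map_eq_zero_iff _ (hα x).1, σ.exct]
    constructor
    · rintro ⟨u, hu⟩
      obtain ⟨w, rfl⟩ := (hβ x).2 u
      exact ⟨w, hu⟩
    · rintro ⟨u, hu⟩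
      exact ⟨_, hu⟩

theorem sesMap_splits {A B A' B' : ARep k n ε} (β : B'.Hom B)
    (hβ : ∀ x, Function.Bijective (β.app x))
    (α : A.Hom A') (hα : ∀ x, Function.Bijective (α.app x)) (σ : SES B A) :
    (sesMap β hβ α hα σ).Splits ↔ σ.Splits := by
  constructor
  · rintro ⟨r, hr⟩
    refine ⟨β.comp r, fun x v => ?_⟩
    obtain ⟨w, rfl⟩ := (hβ x).2 v
    show β.app x (r.app x (σ.ι.app x (β.app x w))) = β.app x w
    exact congrArg _ (hr x w)
  · rintro ⟨r, hr⟩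
    refine ⟨(invHom β hβ).comp r, fun x v => ?_⟩
    show (invHom β hβ).app x (r.app x (σ.ι.app x (β.app x v))) = v
    rw [hr, invHom_left]

theorem cmp_iso {A B A' B' : ARep k n ε} (hA : A.Iso A') (hB : B.Iso B') (h : Cmp A B) :
    Cmp A' B' := by
  obtain ⟨α, hα⟩ := hA
  obtain ⟨β, hβ⟩ := hB
  have hβ' : ∀ x, Function.Bijective ((invHom β hβ).app x) :=
    bij_of_inv _ β (invHom_right β hβ) (invHom_left β hβ)
  have hα' : ∀ x, Function.Bijective ((invHom α hα).app x) :=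
    bij_of_inv _ α (invHom_right α hα) (invHom_left α hα)
  rcases h with h | ⟨σ, h1, h2, h3⟩
  · left
    intro σ
    have := h (sesMap β hβ (invHom α hα) hα' σ)
    rwa [sesMap_splits] at this
  · right
    refine ⟨sesMap (invHom β hβ) hβ' α hα σ, by rwa [sesMap_splits], h2, ?_⟩
    intro τ hτ
    obtain ⟨c, hc, φ, p1, p2, p3⟩ := h3 (sesMap β hβ (invHom α hα) hα' τ) (by rwa [sesMap_splits])
    refine ⟨c, hc, φ, p1, ?_, ?_⟩
    · intro x v
      have := p2 x ((invHom β hβ).app x v)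
      refine this.trans ?_
      show τ.ι.app x (β.app x ((invHom β hβ).app x v)) = _
      rw [invHom_right]
    · intro x v
      have : (invHom α hα).app x (τ.π.app x (φ.app x v)) = c • σ.π.app x v := p3 x v
      have h4 := congrArg (α.app x) this
      rw [invHom_right, map_smul] at h4
      exact h4

theorem basic_iso {T T' : ARep k n ε} (h : T.Iso T') (hT : T.Basic) : T'.Basic := by
  intro A hA hs
  apply hT A hA
  rw [summand_iff_ret] at hs ⊢
  exact ret_trans hs (iso_ret (iso_symm h))

theorem ar_iso {T T' : ARep k n ε} (h : T.Iso T') (hT : AlmostRigid T) : AlmostRigid T' := by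
  refine ⟨basic_iso h hT.1, fun A B hA hB h1 h2 => hT.2 A B hA hB ?_ ?_⟩
  · rw [summand_iff_ret] at *
    exact ret_trans h1 (iso_ret (iso_symm h))
  · rw [summand_iff_ret] at *
    exact ret_trans h2 (iso_ret (iso_symm h))

end PartB
end CambrianA

namespace CambrianA
section PartC1
variable {k : Type} [Field k] {n : ℕ} {ε : ℕ → Bool}

theorem fiber_out {P : Prop} (h : ¬P) (v : fiber k P) : (v : k) = 0 := by
  have hb : (v : k) ∈ (⊥ : Submodule k k) := (if_neg h : fiber k P = ⊥) ▸ v.2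
  exact (Submodule.mem_bot k).1 hb

theorem coe_fiberMap {P Q : Prop} (v : fiber k P) :
    ((fiberMap k P Q v : fiber k Q) : k) = if Q then (v : k) else 0 := by
  unfold fiberMap
  by_cases hP : P
  · by_cases hQ : Q
    · rw [dif_pos ⟨hP, hQ⟩, if_pos hQ]; rfl
    · rw [dif_neg (fun h => hQ h.2), if_neg hQ]; rfl
  · rw [dif_neg (fun h => hP h.1), fiber_out hP]; simp

/-- the element of a fiber with given value (if possible) -/
def mkF (k : Type) [Field k] (P : Prop) : k →ₗ[k] fiber k P :=
  if h : P then LinearMap.codRestrict _ LinearMap.id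
    (fun c => by rw [fiber, if_pos h]; exact Submodule.mem_top) else 0

theorem coe_mkF {P : Prop} (c : k) : ((mkF k P c : fiber k P) : k) = if P then c else 0 := by
  unfold mkF
  split_ifs <;> simp

/-- the interval module attached to a segment -/
def II (k : Type) [Field k] (n : ℕ) (ε : ℕ → Bool) (e : ℕ × ℕ) : ARep k n ε :=
  intervalRep k n ε (e.1 + 1) e.2

/-- its support -/
def Sp (n : ℕ) (e : ℕ × ℕ) (x : ℕ) : Prop := SuppCond n (e.1 + 1) e.2 x

theorem sp_iff {e : ℕ × ℕ} {x : ℕ} : Sp n e x ↔ e.1 < x ∧ x ≤ e.2 ∧ x ≤ n + 2 := by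
  unfold Sp SuppCond; omega

/-- coordinate -/
def cv (e : ℕ × ℕ) (x : ℕ) : (II k n ε e).V x →ₗ[k] k := (fiber k (Sp n e x)).subtype

def mkI (e : ℕ × ℕ) (x : ℕ) : k →ₗ[k] (II k n ε e).V x := mkF k (Sp n e x)

theorem cv_inj {e x} {v w : (II k n ε e).V x} (h : cv e x v = cv e x w) : v = w := Subtype.ext h

theorem cv_out {e x} (h : ¬Sp n e x) (v : (II k n ε e).V x) : cv e x v = 0 := fiber_out h v

theorem cv_mk {e x} (c : k) : cv (n := n) (ε := ε) e x (mkI e x c) = if Sp n e x then c else 0 :=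
  coe_mkF c

theorem mk_cv {e x} (v : (II k n ε e).V x) : mkI e x (cv e x v) = v := by
  apply cv_inj
  rw [cv_mk]
  split_ifs with h
  · rfl
  · exact (cv_out h v).symm

theorem cv_fwd {e ℓ} (v : (II k n ε e).V ℓ) :
    cv e (ℓ + 1) ((II k n ε e).fwd ℓ v) = if ε ℓ = true ∧ Sp n e (ℓ + 1) then cv e ℓ v else 0 := by
  by_cases h : ε ℓ = true
  · have : (II k n ε e).fwd ℓ = fiberMap k (Sp n e ℓ) (Sp n e (ℓ + 1)) := if_pos h
    rw [this]
    simp only [h, true_and]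
    exact coe_fiberMap v
  · rw [(II k n ε e).fwd_zero ℓ (by simpa using h)]
    simp [h]

theorem cv_bwd {e ℓ} (v : (II k n ε e).V (ℓ + 1)) :
    cv e ℓ ((II k n ε e).bwd ℓ v) = if ε ℓ = false ∧ Sp n e ℓ then cv e (ℓ + 1) v else 0 := by
  by_cases h : ε ℓ = true
  · rw [(II k n ε e).bwd_zero ℓ h]
    simp [h]
  · have : (II k n ε e).bwd ℓ = fiberMap k (Sp n e (ℓ + 1)) (Sp n e ℓ) := if_neg h
    rw [this]
    simp only [Bool.not_eq_true] at h
    simp only [h, true_and]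
    exact coe_fiberMap v

/-- morphisms to an interval module -/
def homTo {M : ARep k n ε} (e : ℕ × ℕ) (Φ : ∀ x, M.V x →ₗ[k] k)
    (h0 : ∀ x, ¬Sp n e x → ∀ v, Φ x v = 0)
    (h1 : ∀ ℓ, ε ℓ = true → Sp n e (ℓ + 1) → ∀ v, Φ (ℓ + 1) (M.fwd ℓ v) = Φ ℓ v)
    (h2 : ∀ ℓ, ε ℓ = false → Sp n e ℓ → ∀ v, Φ ℓ (M.bwd ℓ v) = Φ (ℓ + 1) v) :
    M.Hom (II k n ε e) where
  app x := (mkI e x).comp (Φ x)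
  comm_fwd ℓ v := by
    apply cv_inj
    simp only [LinearMap.comp_apply, cv_fwd, cv_mk]
    by_cases hs : Sp n e (ℓ + 1)
    · by_cases he : ε ℓ = true
      · simp only [hs, he, if_true, and_self, h1 ℓ he hs]
        split_ifs with h
        · rfl
        · exact h0 _ h _
      · rw [M.fwd_zero ℓ (by simpa using he)]
        simp [he]
    · simp [hs]
  comm_bwd ℓ v := by
    apply cv_inj
    simp only [LinearMap.comp_apply, cv_bwd, cv_mk]
    by_cases hs : Sp n e ℓ
    · by_cases he : ε ℓ = false
      · simp only [hs, he, if_true, and_self, h2 ℓ he hs]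
        split_ifs with h
        · rfl
        · exact h0 _ h _
      · rw [M.bwd_zero ℓ (by simpa using he)]
        simp [he]
    · simp [hs]

theorem cv_homTo {M : ARep k n ε} (e : ℕ × ℕ) (Φ : ∀ x, M.V x →ₗ[k] k) (h0 h1 h2) (x v) :
    cv e x ((homTo (M := M) e Φ h0 h1 h2).app x v) = Φ x v := by
  show cv e x (mkI e x (Φ x v)) = _
  rw [cv_mk]
  split_ifs with h
  · rfl
  · exact (h0 _ h _).symm

/-- morphisms from an interval module -/
def homFrom {M : ARep k n ε} (e : ℕ × ℕ) (u : ∀ x, M.V x)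
    (h0 : ∀ x, ¬Sp n e x → u x = 0)
    (h1 : ∀ ℓ, ε ℓ = true → Sp n e ℓ → M.fwd ℓ (u ℓ) = u (ℓ + 1))
    (h2 : ∀ ℓ, ε ℓ = false → Sp n e (ℓ + 1) → M.bwd ℓ (u (ℓ + 1)) = u ℓ) :
    (II k n ε e).Hom M where
  app x := (cv e x).smulRight (u x)
  comm_fwd ℓ v := by
    simp only [LinearMap.smulRight_apply, cv_fwd, map_smul]
    by_cases he : ε ℓ = true
    · by_cases hs : Sp n e ℓ
      · rw [h1 ℓ he hs]
        split_ifs with h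
        · rfl
        · rw [h0 (ℓ + 1) (fun h' => h ⟨he, h'⟩)]; simp
      · simp [cv_out hs]
    · rw [M.fwd_zero ℓ (by simpa using he)]
      simp [he]
  comm_bwd ℓ v := by
    simp only [LinearMap.smulRight_apply, cv_bwd, map_smul]
    by_cases he : ε ℓ = false
    · by_cases hs : Sp n e (ℓ + 1)
      · rw [h2 ℓ he hs]
        split_ifs with h
        · rfl
        · rw [h0 ℓ (fun h' => h ⟨he, h'⟩)]; simp
      · simp [cv_out hs]
    · rw [M.bwd_zero ℓ (by simpa using he)]
      simp [he]

theorem homFrom_app {M : ARep k n ε} (e : ℕ × ℕ) (u : ∀ x, M.V x) (h0 h1 h2) (x v) :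
    (homFrom (M := M) e u h0 h1 h2).app x v = cv e x v • u x := rfl

/-- pulled back filtrations -/
def PW (M : ARep k n ε) (W : ∀ x, Submodule k (M.V x)) : ℕ → ∀ i, Submodule k (M.V i)
  | 0, i => W i
  | d + 1, i => if ε i = true then (PW M W d (i + 1)).comap (M.fwd i)
      else (PW M W d (i + 1)).map (M.bwd i)

theorem PW_succ (M : ARep k n ε) (W : ∀ x, Submodule k (M.V x)) (d i) :
    PW M W (d + 1) i = PW M (fun j => PW M W 1 j) d i := by
  induction d generalizing i with
  | zero => rfl
  | succ d ih =>
    rw [PW, ih]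
    rfl

theorem PW_congr (M : ARep k n ε) (W W' : ∀ x, Submodule k (M.V x)) (d i)
    (h : ∀ j, j = i + d → W j = W' j) : PW M W d i = PW M W' d i := by
  induction d generalizing i with
  | zero => exact h i rfl
  | succ d ih =>
    rw [PW, PW, ih (i + 1) (fun j hj => h j (by omega))]

theorem chain_lemma (M : ARep k n ε) (W : ∀ x, Submodule k (M.V x)) (d i) (v : M.V i)
    (hv : v ∈ PW M W d i) : ∃ u : ∀ x, M.V x, u i = v ∧
      (∀ ℓ, i ≤ ℓ → ℓ < i + d → (ε ℓ = true → M.fwd ℓ (u ℓ) = u (ℓ + 1)) ∧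
        (ε ℓ = false → M.bwd ℓ (u (ℓ + 1)) = u ℓ)) ∧ ∀ j, j = i + d → u j ∈ W j := by
  induction d generalizing i with
  | zero =>
    refine ⟨Function.update (fun x => (0 : M.V x)) i v, by simp, fun ℓ h1 h2 => by omega, ?_⟩
    intro j hj
    have : j = i := hj
    subst this
    rw [Function.update_self]
    exact hv
  | succ d ih =>
    have key : ∀ w : M.V (i + 1), w ∈ PW M W d (i + 1) → (ε i = true → M.fwd i v = w) →
      (ε i = false → M.bwd i w = v) → ∃ u : ∀ x, M.V x, u i = v ∧
      (∀ ℓ, i ≤ ℓ → ℓ < i + (d + 1) → (ε ℓ = true → M.fwd ℓ (u ℓ) = u (ℓ + 1)) ∧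
        (ε ℓ = false → M.bwd ℓ (u (ℓ + 1)) = u ℓ)) ∧ ∀ j, j = i + (d + 1) → u j ∈ W j := by
      intro w hw h1 h2
      obtain ⟨u, a1, a2, a3⟩ := ih (i + 1) w hw
      have N : ∀ j, j ≠ i → Function.update u i v j = u j := fun j hj =>
        Function.update_of_ne hj _ _
      refine ⟨Function.update u i v, Function.update_self .., ?_, ?_⟩
      · intro ℓ hl1 hl2
        rw [N (ℓ + 1) (by omega)]
        rcases eq_or_lt_of_le hl1 with h | h
        · subst h
          rw [Function.update_self, a1]
          exact ⟨h1, h2⟩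
        · rw [N ℓ (by omega)]
          exact a2 ℓ (by omega) (by omega)
      · intro j hj
        rw [N j (by omega)]
        exact a3 j (by omega)
    rw [PW] at hv
    by_cases he : ε i = true
    · rw [if_pos he] at hv
      exact key (M.fwd i v) hv (fun _ => rfl) (fun h => by simp [he] at h)
    · rw [if_neg he] at hv
      obtain ⟨w, hw, rfl⟩ := hv
      exact key w hw (fun h => absurd h he) (fun _ => rfl)

theorem extend_lemma {V W : Type} [AddCommGroup V] [Module k V] [AddCommGroup W] [Module k W]
    (f : V →ₗ[k] W) (P : Submodule k W) (φ : V →ₗ[k] k) (h : ∀ v, f v ∈ P → φ v = 0) :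
    ∃ ψ : W →ₗ[k] k, (∀ v, ψ (f v) = φ v) ∧ ∀ w ∈ P, ψ w = 0 := by
  have : φ ∈ LinearMap.range (P.mkQ.comp f).dualMap := by
    rw [LinearMap.range_dualMap_eq_dualAnnihilator_ker, Submodule.mem_dualAnnihilator]
    intro v hv
    rw [LinearMap.mem_ker, LinearMap.comp_apply, Submodule.mkQ_apply,
      Submodule.Quotient.mk_eq_zero] at hv
    exact h v hv
  obtain ⟨χ, hχ⟩ := this
  refine ⟨χ.comp P.mkQ, fun v => ?_, fun w hw => ?_⟩
  · rw [← hχ]; rfl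
  · rw [LinearMap.comp_apply, Submodule.mkQ_apply, (Submodule.Quotient.mk_eq_zero P).2 hw, map_zero]

theorem cochain_lemma (M : ARep k n ε) (W : ∀ x, Submodule k (M.V x)) (d i) (φ : M.V i →ₗ[k] k)
    (hv : ∀ v ∈ PW M W d i, φ v = 0) : ∃ u : ∀ x, M.V x →ₗ[k] k, u i = φ ∧
      (∀ ℓ, i ≤ ℓ → ℓ < i + d → (ε ℓ = true → ∀ v, u (ℓ + 1) (M.fwd ℓ v) = u ℓ v) ∧
        (ε ℓ = false → ∀ v, u ℓ (M.bwd ℓ v) = u (ℓ + 1) v)) ∧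
        ∀ j, j = i + d → ∀ v ∈ W j, u j v = 0 := by
  induction d generalizing i with
  | zero =>
    refine ⟨Function.update (fun x => (0 : M.V x →ₗ[k] k)) i φ, by simp,
      fun ℓ h1 h2 => by omega, ?_⟩
    intro j hj
    have : j = i := hj
    subst this
    rw [Function.update_self]
    exact hv
  | succ d ih =>
    have key : ∀ ψ : M.V (i + 1) →ₗ[k] k, (∀ w ∈ PW M W d (i + 1), ψ w = 0) →
      (ε i = true → ∀ v, ψ (M.fwd i v) = φ v) →
      (ε i = false → ∀ v, φ (M.bwd i v) = ψ v) → ∃ u : ∀ x, M.V x →ₗ[k] k, u i = φ ∧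
      (∀ ℓ, i ≤ ℓ → ℓ < i + (d + 1) → (ε ℓ = true → ∀ v, u (ℓ + 1) (M.fwd ℓ v) = u ℓ v) ∧
        (ε ℓ = false → ∀ v, u ℓ (M.bwd ℓ v) = u (ℓ + 1) v)) ∧
        ∀ j, j = i + (d + 1) → ∀ v ∈ W j, u j v = 0 := by
      intro w hw h1 h2
      obtain ⟨u, a1, a2, a3⟩ := ih (i + 1) w hw
      have N : ∀ j, j ≠ i → Function.update u i φ j = u j := fun j hj =>
        Function.update_of_ne hj _ _
      refine ⟨Function.update u i φ, Function.update_self .., ?_, ?_⟩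
      · intro ℓ hl1 hl2
        rw [N (ℓ + 1) (by omega)]
        rcases eq_or_lt_of_le hl1 with h | h
        · subst h
          rw [Function.update_self, a1]
          exact ⟨h1, h2⟩
        · rw [N ℓ (by omega)]
          exact a2 ℓ (by omega) (by omega)
      · intro j hj
        rw [N j (by omega)]
        exact a3 j (by omega)
    rw [PW] at hv
    by_cases he : ε i = true
    · rw [if_pos he] at hv
      obtain ⟨ψ, p1, p2⟩ := extend_lemma (M.fwd i) (PW M W d (i + 1)) φ hv
      exact key ψ p2 (fun _ => p1) (fun h => by simp [he] at h)
    · rw [if_neg he] at hv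
      exact key (φ.comp (M.bwd i)) (fun w hw => hv _ ⟨w, hw, rfl⟩)
        (fun h => absurd h he) (fun _ _ => rfl)

/-- gluing a chain and a cochain to a retract -/
theorem glue_lemma (M : ARep k n ε) (W W' : ∀ x, Submodule k (M.V x)) (d i)
    (hi : ∀ j, j + 1 = i → ∀ v : M.V j, v = 0)
    (hW1 : ∀ j, ε j = true → (∀ v ∈ W j, M.fwd j v = 0) ∨ W' j = ⊤)
    (hW2 : ∀ j, ε j = false → W j = ⊥ ∨ ∀ v, M.bwd j v ∈ W' j)
    (v : M.V i) (hv : v ∈ PW M W d i) (hv' : v ∉ PW M W' d i) :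
    ∃ e, ValidPair n e ∧ Ret (II k n ε e) M := by
  obtain ⟨φ, hφ1, hφ2⟩ := Submodule.exists_le_ker_of_notMem hv'
  have hv0 : ((φ v)⁻¹ • φ) v = 1 := by
    rw [LinearMap.smul_apply, smul_eq_mul, inv_mul_cancel₀ hφ1]
  obtain ⟨u, u1, u2, u3⟩ := chain_lemma M W d i v hv
  obtain ⟨Φ, f1, f2, f3⟩ := cochain_lemma M W' d i ((φ v)⁻¹ • φ) (fun w hw => by
    have : φ w = 0 := hφ2 hw
    rw [LinearMap.smul_apply, this, smul_zero])
  have pair : ∀ c, c ≤ d → Φ (i + c) (u (i + c)) = 1 := by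
    intro c
    induction c with
    | zero => intro _; rw [← f1, ← u1] at hv0; exact hv0
    | succ c ih =>
      intro hc
      have ih := ih (by omega)
      have a := u2 (i + c) (by omega) (by omega)
      have b := f2 (i + c) (by omega) (by omega)
      show Φ (i + c + 1) (u (i + c + 1)) = 1
      by_cases he : ε (i + c) = true
      · rw [← a.1 he, b.1 he, ih]
      · rw [Bool.not_eq_true] at he
        rw [← b.2 he, a.2 he, ih]
  have une : ∀ c, c ≤ d → u (i + c) ≠ 0 := fun c hc h => by
    have := pair c hc; rw [h, map_zero] at this; exact zero_ne_one this
  have i1 : 1 ≤ i := by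
    by_contra h
    exact une 0 (by omega) (M.triv _ (by omega) _)
  have i2 : i + d ≤ n + 2 := by
    by_contra h
    exact une d le_rfl (M.triv _ (by omega) _)
  have S : ∀ x, Sp n (i - 1, i + d) x ↔ i ≤ x ∧ x ≤ i + d := by
    intro x; rw [sp_iff]; simp only; omega
  have S' : ∀ x, i ≤ x ∧ x ≤ i + d → Φ x (u x) = 1 := by
    intro x hx
    obtain ⟨c, rfl⟩ := Nat.exists_eq_add_of_le hx.1
    exact pair c (by omega)
  refine ⟨(i - 1, i + d), ⟨by simp only; omega, i2⟩,
    homFrom (i - 1, i + d) (fun x => if i ≤ x ∧ x ≤ i + d then u x else 0) ?_ ?_ ?_,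
    homTo (i - 1, i + d) (fun x => if i ≤ x ∧ x ≤ i + d then Φ x else 0) ?_ ?_ ?_, ?_⟩
  · intro x hx
    rw [S] at hx
    rw [if_neg hx]
  · intro ℓ he hs
    rw [S] at hs
    rw [if_pos hs]
    by_cases h : ℓ = i + d
    · subst h
      rw [if_neg (by omega)]
      rcases hW1 _ he with h | h
      · exact h _ (u3 _ rfl)
      · exfalso
        have := f3 _ rfl (u (i + d)) (by rw [h]; exact Submodule.mem_top)
        rw [pair d le_rfl] at this
        exact one_ne_zero this
    · rw [if_pos (by omega)]
      exact (u2 ℓ (by omega) (by omega)).1 he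
  · intro ℓ he hs
    rw [S] at hs
    rw [if_pos hs]
    by_cases h : ℓ + 1 = i
    · rw [hi ℓ h (M.bwd ℓ _), if_neg (by omega)]
    · rw [if_pos (by omega)]
      exact (u2 ℓ (by omega) (by omega)).2 he
  · intro x hx v
    rw [S] at hx
    rw [if_neg hx]; rfl
  · intro ℓ he hs v
    rw [S] at hs
    rw [if_pos hs]
    by_cases h : ℓ + 1 = i
    · rw [hi ℓ h v, map_zero, map_zero, map_zero]
    · rw [if_pos (by omega)]
      exact (f2 ℓ (by omega) (by omega)).1 he v
  · intro ℓ he hs v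
    rw [S] at hs
    rw [if_pos hs]
    by_cases h : ℓ = i + d
    · subst h
      rw [if_neg (by omega)]
      rcases hW2 _ he with h | h
      · exfalso
        have := u3 _ rfl
        rw [h] at this
        exact une d le_rfl ((Submodule.mem_bot k).1 this)
      · exact f3 _ rfl _ (h v)
    · rw [if_pos (by omega)]
      exact (f2 ℓ (by omega) (by omega)).2 he v
  · intro x v
    apply cv_inj
    rw [cv_homTo, homFrom_app, map_smul]
    by_cases h : i ≤ x ∧ x ≤ i + d
    · rw [if_pos h, if_pos h, S' x h, smul_eq_mul, mul_one]
    · rw [if_neg h, cv_out (by rwa [S])]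
      simp

theorem split_lemma (M : ARep k n ε) (hM : ¬M.IsZero) :
    ∃ e, ValidPair n e ∧ Ret (II k n ε e) M := by
  have hM' : ∃ i, ∃ v : M.V i, v ≠ 0 := by
    unfold ARep.IsZero at hM
    push Not at hM
    exact hM
  set i := Nat.find hM' with hi
  obtain ⟨v0, hv0⟩ := Nat.find_spec hM'
  have hmin : ∀ j, j + 1 = i → ∀ v : M.V j, v = 0 := by
    intro j hj v
    by_contra hne
    have := Nat.find_min' hM' ⟨v, hne⟩
    omega
  by_contra hcon
  have A1 : ∀ d, PW M (fun _ => ⊥) (d + 1) i ≤ PW M (fun _ => ⊥) d i := by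
    intro d v hv
    by_contra hv'
    rw [PW_succ] at hv
    refine hcon (glue_lemma M _ _ d i hmin ?_ ?_ v hv hv')
    · intro j he
      left
      intro v hv
      simp only [PW, if_pos he] at hv
      exact hv
    · intro j he
      left
      simp [PW, he]
  have A2 : ∀ d, PW M (fun _ => ⊤) d i ≤ PW M (fun _ => ⊤) (d + 1) i := by
    intro d v hv
    by_contra hv'
    rw [PW_succ] at hv'
    refine hcon (glue_lemma M _ _ d i hmin ?_ ?_ v hv hv')
    · intro j he
      right
      simp [PW, he]
    · intro j he
      right
      intro v
      simp [PW, he]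
  have B1 : ∀ d, PW M (fun _ => ⊥) d i ≤ ⊥ := by
    intro d
    induction d with
    | zero => exact le_rfl
    | succ d ih => exact (A1 d).trans ih
  have B2 : ∀ d, ⊤ ≤ PW M (fun _ => ⊤) d i := by
    intro d
    induction d with
    | zero => exact le_rfl
    | succ d ih => exact ih.trans (A2 d)
  have h1 := B1 (n + 3)
  have h2 := B2 (n + 3)
  rw [PW_congr M (fun _ => ⊤) (fun _ => ⊥) (n + 3) i (by
    intro j hj
    ext v
    simp [M.triv j (by omega) v])] at h2
  exact hv0 ((Submodule.mem_bot k).1 (h1 (h2 (Submodule.mem_top (x := v0)))))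

end PartC1
end CambrianA

namespace CambrianA
section PartC2
variable {k : Type} [Field k] {n : ℕ} {ε : ℕ → Bool}

theorem II_ne {e x} (hs : Sp n e x) : mkI (k := k) (n := n) (ε := ε) e x 1 ≠ 0 := by
  intro h
  have := cv_mk (k := k) (n := n) (ε := ε) (e := e) (x := x) 1
  rw [h, map_zero, if_pos hs] at this
  exact zero_ne_one this

theorem sp_first {e : ℕ × ℕ} (he : ValidPair n e) : Sp n e (e.1 + 1) := by
  rw [sp_iff]; unfold ValidPair at he; omega

theorem II_nonzero {e} (he : ValidPair n e) : ¬(II k n ε e).IsZero := fun h =>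
  II_ne (sp_first he) (h _ _)

theorem finrank_II_le (e x) : Module.finrank k ((II k n ε e).V x) ≤ 1 := by
  have h := LinearMap.finrank_le_finrank_of_injective (f := cv (k := k) (n := n) (ε := ε) e x)
    (fun v w h => cv_inj h)
  rwa [Module.finrank_self] at h

theorem finrank_II_pos {e x} (hs : Sp n e x) : 1 ≤ Module.finrank k ((II k n ε e).V x) := by
  have : Nontrivial ((II k n ε e).V x) := ⟨⟨_, 0, II_ne hs⟩⟩
  exact Module.finrank_pos

theorem iso_finrank {A B : ARep k n ε} (h : A.Iso B) (x) :
    Module.finrank k (A.V x) = Module.finrank k (B.V x) := by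
  obtain ⟨f, hf⟩ := h
  exact LinearEquiv.finrank_eq (LinearEquiv.ofBijective (f.app x) (hf x))

theorem dsum_finrank (A B : ARep k n ε) (x) :
    Module.finrank k ((A.dsum B).V x) = Module.finrank k (A.V x) + Module.finrank k (B.V x) :=
  Module.finrank_prod (R := k) (M := A.V x) (M' := B.V x)

theorem ret_finrank {A B : ARep k n ε} (h : Ret A B) (x) :
    Module.finrank k (A.V x) ≤ Module.finrank k (B.V x) := by
  obtain ⟨f, g, hfg⟩ := h
  exact LinearMap.finrank_le_finrank_of_injective (f := f.app x)
    (Function.LeftInverse.injective (hfg x))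

def dimT (M : ARep k n ε) : ℕ := ∑ x ∈ Finset.range (n + 3), Module.finrank k (M.V x)

theorem zero_iso {M N : ARep k n ε} (hM : M.IsZero) (hN : N.IsZero) : M.Iso N :=
  ⟨zeroHom M N, fun x => ⟨fun v w _ => (hM x v).trans (hM x w).symm,
    fun _ => ⟨0, (hN x _).trans (hN x _).symm⟩⟩⟩

theorem zeroRep_zero : (zeroRep k n ε).IsZero := fun _ v => Subtype.ext (fiber_out id v)

theorem decomp_aux (N : ℕ) : ∀ M : ARep k n ε, dimT M ≤ N →
    ∃ L : List (ℕ × ℕ), (∀ e ∈ L, ValidPair n e) ∧ M.Iso (dsumList k n ε (L.map (II k n ε))) := by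
  induction N with
  | zero =>
    intro M hM
    by_cases hz : M.IsZero
    · exact ⟨[], by simp, zero_iso hz zeroRep_zero⟩
    · obtain ⟨e, he, hr⟩ := split_lemma M hz
      have h1 := (finrank_II_pos (k := k) (ε := ε) (sp_first he)).trans (ret_finrank hr (e.1 + 1))
      have h2 := Finset.single_le_sum (f := fun x => Module.finrank k (M.V x))
        (fun _ _ => Nat.zero_le _) (Finset.mem_range.2 (show e.1 + 1 < n + 3 by
          unfold ValidPair at he; omega))
      unfold dimT at hM
      omega
  | succ N ih =>
    intro M hM
    by_cases hz : M.IsZero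
    · exact ⟨[], by simp, zero_iso hz zeroRep_zero⟩
    · obtain ⟨e, he, hr⟩ := split_lemma M hz
      obtain ⟨B, hB⟩ := summand_iff_ret.2 hr
      have hd : dimT M = dimT (II k n ε e) + dimT B := by
        unfold dimT
        rw [← Finset.sum_add_distrib]
        exact Finset.sum_congr rfl fun x _ => (iso_finrank hB x).trans (dsum_finrank _ _ x)
      have h2 := Finset.single_le_sum (f := fun x => Module.finrank k ((II k n ε e).V x))
        (fun _ _ => Nat.zero_le _) (Finset.mem_range.2 (show e.1 + 1 < n + 3 by
          unfold ValidPair at he; omega))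
      have h1 := finrank_II_pos (k := k) (ε := ε) (sp_first he)
      obtain ⟨L, hL, hi⟩ := ih B (by unfold dimT at hd hM ⊢; omega)
      refine ⟨e :: L, ?_, iso_trans hB (iso_dsum (iso_refl _) hi)⟩
      intro f hf
      rcases List.mem_cons.1 hf with rfl | hf
      · exact he
      · exact hL f hf

theorem decomp (M : ARep k n ε) :
    ∃ L : List (ℕ × ℕ), (∀ e ∈ L, ValidPair n e) ∧ M.Iso (dsumList k n ε (L.map (II k n ε))) :=
  decomp_aux _ M le_rfl

/-- endomorphisms of interval modules are scalars -/
theorem endo_scalar {e} (h : (II k n ε e).Hom (II k n ε e)) :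
    ∃ c : k, ∀ x v, h.app x v = c • v := by
  let a : ℕ → k := fun x => cv e x (h.app x (mkI e x 1))
  have ha : ∀ x v, cv e x (h.app x v) = cv e x v * a x := by
    intro x v
    conv_lhs => rw [← mk_cv v, ← mul_one (cv e x v), ← smul_eq_mul, map_smul, map_smul, map_smul]
    rfl
  have step : ∀ x, Sp n e x → Sp n e (x + 1) → a (x + 1) = a x := by
    intro x h1 h2
    by_cases he : ε x = true
    · have := congrArg (cv e (x + 1)) (h.comm_fwd x (mkI e x 1))
      rw [ha, cv_fwd, cv_fwd, if_pos ⟨he, h2⟩, if_pos ⟨he, h2⟩, ha, cv_mk, if_pos h1] at this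
      simpa using this
    · rw [Bool.not_eq_true] at he
      have := congrArg (cv e x) (h.comm_bwd x (mkI e (x + 1) 1))
      rw [ha, cv_bwd, cv_bwd, if_pos ⟨he, h1⟩, if_pos ⟨he, h1⟩, ha, cv_mk, if_pos h2] at this
      simpa using this.symm
  have all : ∀ d, Sp n e (e.1 + 1 + d) → a (e.1 + 1 + d) = a (e.1 + 1) := by
    intro d
    induction d with
    | zero => intro _; rfl
    | succ d ih =>
      intro hs
      rw [sp_iff] at hs
      have h1 : Sp n e (e.1 + 1 + d) := by rw [sp_iff]; omega
      rw [← ih h1]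
      exact step _ h1 (by rw [sp_iff]; omega)
  refine ⟨a (e.1 + 1), fun x v => cv_inj ?_⟩
  rw [ha, map_smul, smul_eq_mul, mul_comm]
  by_cases hs : Sp n e x
  · have hs' := sp_iff.1 hs
    obtain ⟨d, rfl⟩ := Nat.exists_eq_add_of_le (show e.1 + 1 ≤ x by omega)
    rw [all d hs]
  · rw [cv_out hs]; simp

theorem sp_sub {e f} (p : (II k n ε e).Hom (II k n ε f)) (q : (II k n ε f).Hom (II k n ε e))
    {x} {v : (II k n ε e).V x} (hv : q.app x (p.app x v) ≠ 0) {y} (hy : Sp n e y) : Sp n f y := by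
  obtain ⟨c, hc⟩ := endo_scalar (q.comp p)
  have hc' : ∀ x v, q.app x (p.app x v) = c • v := hc
  by_contra hf
  have h1 : p.app y (mkI e y 1) = 0 := cv_inj (by rw [cv_out hf, map_zero])
  have h2 := hc' y (mkI e y 1)
  rw [h1, map_zero] at h2
  rcases smul_eq_zero.1 h2.symm with h | h
  · rw [hc' x v, h, zero_smul] at hv
    exact hv rfl
  · exact II_ne hy h

theorem eq_of_comp {e f} (he : ValidPair n e) (hf : ValidPair n f)
    (p : (II k n ε e).Hom (II k n ε f)) (q : (II k n ε f).Hom (II k n ε e))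
    {x} {v : (II k n ε e).V x} (hv : q.app x (p.app x v) ≠ 0) : e = f := by
  obtain ⟨c, hc⟩ := endo_scalar (q.comp p)
  have hc' : ∀ x v, q.app x (p.app x v) = c • v := hc
  have hv' : p.app x (q.app x (p.app x v)) ≠ 0 := by
    intro h
    have h1 := hc' x (q.app x (p.app x v))
    rw [h, map_zero] at h1
    rcases smul_eq_zero.1 h1.symm with h | h
    · rw [hc' x v, h, zero_smul] at hv
      exact hv rfl
    · exact hv h
  have key : ∀ y, Sp n e y ↔ Sp n f y := fun y => ⟨sp_sub p q hv, sp_sub q p hv'⟩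
  unfold ValidPair at he hf
  have a1 := key (e.1 + 1)
  have a2 := key (f.1 + 1)
  have a3 := key e.2
  have a4 := key f.2
  simp only [sp_iff] at a1 a2 a3 a4
  ext <;> omega

/-- no nonzero endomorphism of `II e` factors through `A` -/
def Noth (A : ARep k n ε) (e : ℕ × ℕ) : Prop :=
  ∀ (p : (II k n ε e).Hom A) (q : A.Hom (II k n ε e)) x v, q.app x (p.app x v) = 0

theorem noth_II {e f} (he : ValidPair n e) (hf : ValidPair n f) (h : e ≠ f) :
    Noth (II k n ε f) e := fun p q _ _ => by
  by_contra hv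
  exact h (eq_of_comp he hf p q hv)

theorem dsum_decomp {A B C : ARep k n ε} (q : (A.dsum B).Hom C) (x) (w : (A.dsum B).V x) :
    q.app x w = (q.comp (inlHom A B)).app x ((fstHom A B).app x w) +
      (q.comp (inrHom A B)).app x ((sndHom A B).app x w) := by
  have h : w = (inlHom A B).app x ((fstHom A B).app x w) + (inrHom A B).app x ((sndHom A B).app x w) :=
    Prod.ext (add_zero _).symm (zero_add _).symm
  exact (congrArg (q.app x) h).trans (map_add (q.app x) _ _)

theorem noth_dsum {A B : ARep k n ε} {e} (hA : Noth A e) (hB : Noth B e) :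
    Noth (A.dsum B) e := fun p q x v => by
  refine (dsum_decomp q x _).trans ?_
  have h1 := hA ((fstHom A B).comp p) (q.comp (inlHom A B)) x v
  have h2 := hB ((sndHom A B).comp p) (q.comp (inrHom A B)) x v
  exact (congrArg₂ (· + ·) h1 h2).trans (add_zero 0)

theorem noth_list {L : List (ℕ × ℕ)} {e} (hL : ∀ f ∈ L, ValidPair n f) (he : ValidPair n e)
    (h : e ∉ L) : Noth (dsumList k n ε (L.map (II k n ε))) e := by
  induction L with
  | nil =>
    intro p q x v
    exact (congrArg (q.app x) (zeroRep_zero x (p.app x v))).trans (map_zero (q.app x))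
  | cons f L ih =>
    rw [List.mem_cons, not_or] at h
    exact noth_dsum (noth_II he (hL f (by simp)) h.1) (ih (fun g hg => hL g (by simp [hg])) h.2)

theorem noth_not_ret {A : ARep k n ε} {e} (he : ValidPair n e) (h : Noth A e) :
    ¬Ret (II k n ε e) A := by
  rintro ⟨p, q, hpq⟩
  exact II_ne (sp_first he) ((hpq _ _).symm.trans (h p q _ _))

theorem noth_two {A : ARep k n ε} {e} (h : Noth A e)
    (p : ((II k n ε e).dsum (II k n ε e)).Hom A) (q : A.Hom ((II k n ε e).dsum (II k n ε e)))
    (x v) : q.app x (p.app x v) = 0 := by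
  rw [dsum_decomp p, map_add]
  have key : ∀ (p' : (II k n ε e).Hom A) (w), q.app x (p'.app x w) = 0 := fun p' w =>
    Prod.ext (h p' ((fstHom _ _).comp q) x w) (h p' ((sndHom _ _).comp q) x w)
  rw [key, key, add_zero]

theorem II_dbl {e} (he : ValidPair n e) :
    ¬Ret ((II k n ε e).dsum (II k n ε e)) (II k n ε e) := by
  intro h
  have h1 := ret_finrank h (e.1 + 1)
  rw [dsum_finrank] at h1
  have h2 := finrank_II_pos (k := k) (ε := ε) (sp_first he)
  omega

theorem list_dbl {L : List (ℕ × ℕ)} {e} (hL : ∀ f ∈ L, ValidPair n f) (he : ValidPair n e)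
    (hn : L.Nodup) :
    ¬Ret ((II k n ε e).dsum (II k n ε e)) (dsumList k n ε (L.map (II k n ε))) := by
  induction L with
  | nil =>
    intro h
    exact noth_not_ret he (noth_list (L := []) (by simp) he (by simp)) (ret_trans (ret_inl _ _) h)
  | cons f L ih =>
    rw [List.nodup_cons] at hn
    have hL' : ∀ g ∈ L, ValidPair n g := fun g hg => hL g (by simp [hg])
    rintro ⟨p, q, hpq⟩
    by_cases hef : e = f
    · subst hef
      have hN := noth_list (k := k) (ε := ε) hL' he hn.1
      refine II_dbl (k := k) (ε := ε) he
        ⟨(fstHom _ (dsumList k n ε (L.map (II k n ε)))).comp p,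
          q.comp (inlHom _ (dsumList k n ε (L.map (II k n ε)))), fun x v => ?_⟩
      have h1 := (dsum_decomp q x _).symm.trans (hpq x v)
      have h2 := noth_two hN ((sndHom _ _).comp p) (q.comp (inrHom _ _)) x v
      refine Eq.trans ?_ h1
      exact (add_zero _).symm.trans (congrArg₂ (· + ·) rfl h2.symm)
    · have hN := noth_II (k := k) (ε := ε) he (hL f (by simp)) hef
      refine ih hL' hn.2
        ⟨(sndHom _ (dsumList k n ε (L.map (II k n ε)))).comp p,
          q.comp (inrHom _ (dsumList k n ε (L.map (II k n ε)))), fun x v => ?_⟩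
      have h1 := (dsum_decomp q x _).symm.trans (hpq x v)
      have h2 := noth_two hN ((fstHom _ _).comp p) (q.comp (inlHom _ _)) x v
      refine Eq.trans ?_ h1
      exact (zero_add _).symm.trans (congrArg₂ (· + ·) h2.symm rfl)

theorem ret_list {L : List (ℕ × ℕ)} {e} (hL : ∀ f ∈ L, ValidPair n f) (he : ValidPair n e) :
    Ret (II k n ε e) (dsumList k n ε (L.map (II k n ε))) ↔ e ∈ L := by
  constructor
  · intro h
    by_contra hn
    exact noth_not_ret he (noth_list hL he hn) h
  · intro h
    exact ret_mem (List.mem_map_of_mem h)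

theorem II_indec {e} (he : ValidPair n e) : (II k n ε e).Indec := by
  refine ⟨II_nonzero he, fun A B h => ?_⟩
  by_contra hc
  rw [not_or] at hc
  have key : ∀ f, ValidPair n f → Ret (II k n ε f) (II k n ε e) → f = e := by
    rintro f hf ⟨p, q, hpq⟩
    refine eq_of_comp hf he p q (x := f.1 + 1) (v := mkI f _ 1) ?_
    rw [hpq]
    exact II_ne (sp_first hf)
  obtain ⟨f, hf, h1⟩ := split_lemma A hc.1
  obtain ⟨g, hg, h2⟩ := split_lemma B hc.2
  have h' := iso_ret (iso_symm h)
  have e1 := key f hf (ret_trans h1 (ret_trans (ret_inl A B) h'))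
  have e2 := key g hg (ret_trans h2 (ret_trans (ret_inr A B) h'))
  subst e1
  subst e2
  exact II_dbl he (ret_trans (ret_dsum h1 h2) h')

theorem indec_II {A : ARep k n ε} (hA : A.Indec) : ∃ e, ValidPair n e ∧ A.Iso (II k n ε e) := by
  obtain ⟨e, he, hr⟩ := split_lemma A hA.1
  obtain ⟨B, hB⟩ := summand_iff_ret.2 hr
  refine ⟨e, he, ?_⟩
  rcases hA.2 _ _ hB with h | h
  · exact absurd h (II_nonzero he)
  · refine iso_trans hB ⟨fstHom _ _, fun x => ⟨fun v w hvw => ?_, fun v => ⟨(v, 0), rfl⟩⟩⟩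
    exact Prod.ext hvw ((h x _).trans (h x _).symm)

theorem indec_dim {A : ARep k n ε} (hA : A.Indec) (x) : Module.finrank k (A.V x) ≤ 1 := by
  obtain ⟨e, _, h⟩ := indec_II hA
  rw [iso_finrank h]
  exact finrank_II_le e x

end PartC2
end CambrianA

namespace CambrianA
section PartD
variable {k : Type} [Field k] {n : ℕ} {ε : ℕ → Bool}

/-- the cocycle `θ` is the coboundary of `h` -/
def CoB (n : ℕ) (ε : ℕ → Bool) (e f : ℕ × ℕ) (θ h : ℕ → k) : Prop :=
  (∀ x, ¬(Sp n e x ∧ Sp n f x) → h x = 0) ∧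
  (∀ ℓ, ε ℓ = true → Sp n e ℓ → Sp n f (ℓ + 1) → θ ℓ = h ℓ - h (ℓ + 1)) ∧
  (∀ ℓ, ε ℓ = false → Sp n e (ℓ + 1) → Sp n f ℓ → θ ℓ = h (ℓ + 1) - h ℓ)

/-- `θ` is the cocycle of the sequence `τ` with respect to the linear retraction `ρ` -/
def IsCoc {e f : ℕ × ℕ} (τ : SES (II k n ε f) (II k n ε e))
    (ρ : ∀ x, τ.E.V x →ₗ[k] (II k n ε f).V x) (θ : ℕ → k) : Prop :=
  (∀ x b, ρ x (τ.ι.app x b) = b) ∧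
  (∀ ℓ, ε ℓ = true → Sp n f (ℓ + 1) → ∀ v, cv f (ℓ + 1) (ρ (ℓ + 1) (τ.E.fwd ℓ v)) =
    cv f ℓ (ρ ℓ v) + θ ℓ * cv e ℓ (τ.π.app ℓ v)) ∧
  (∀ ℓ, ε ℓ = false → Sp n f ℓ → ∀ v, cv f ℓ (ρ ℓ (τ.E.bwd ℓ v)) =
    cv f (ℓ + 1) (ρ (ℓ + 1) v) + θ ℓ * cv e (ℓ + 1) (τ.π.app (ℓ + 1) v))

theorem pi_iota {A B : ARep k n ε} (τ : SES B A) (x) (b : B.V x) :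
    τ.π.app x (τ.ι.app x b) = 0 := (τ.exct x _).2 ⟨b, rfl⟩

theorem factor_pi {e : ℕ × ℕ} {B : ARep k n ε} (τ : SES B (II k n ε e)) (x)
    (D : τ.E.V x →ₗ[k] k) (hD : ∀ b, D (τ.ι.app x b) = 0) :
    ∃ t : k, ∀ v, D v = t * cv e x (τ.π.app x v) := by
  obtain ⟨s, hs⟩ := τ.surj x (mkI e x 1)
  refine ⟨D s, fun v => ?_⟩
  have h1 : τ.π.app x (v - cv e x (τ.π.app x v) • s) = 0 := by
    rw [map_sub, map_smul, hs, ← map_smul, smul_eq_mul, mul_one, mk_cv, sub_self]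
  obtain ⟨u, hu⟩ := (τ.exct x _).1 h1
  have h2 := hD u
  rw [hu, map_sub, map_smul, smul_eq_mul] at h2
  rw [sub_eq_zero.1 h2, mul_comm]

theorem exists_coc {e f : ℕ × ℕ} (τ : SES (II k n ε f) (II k n ε e)) :
    ∃ ρ θ, IsCoc τ ρ θ := by
  have hρ : ∀ x, ∃ r : τ.E.V x →ₗ[k] (II k n ε f).V x, ∀ b, r (τ.ι.app x b) = b := by
    intro x
    obtain ⟨r, hr⟩ := LinearMap.exists_leftInverse_of_injective (τ.ι.app x)
      (LinearMap.ker_eq_bot.2 (τ.inj x))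
    exact ⟨r, fun b => LinearMap.congr_fun hr b⟩
  choose ρ hρ using hρ
  have hθ : ∀ ℓ, ∃ t : k, (ε ℓ = true → Sp n f (ℓ + 1) → ∀ v,
      cv f (ℓ + 1) (ρ (ℓ + 1) (τ.E.fwd ℓ v)) =
        cv f ℓ (ρ ℓ v) + t * cv e ℓ (τ.π.app ℓ v)) ∧
      (ε ℓ = false → Sp n f ℓ → ∀ v, cv f ℓ (ρ ℓ (τ.E.bwd ℓ v)) =
        cv f (ℓ + 1) (ρ (ℓ + 1) v) + t * cv e (ℓ + 1) (τ.π.app (ℓ + 1) v)) := by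
    intro ℓ
    by_cases he : ε ℓ = true
    · by_cases hs : Sp n f (ℓ + 1)
      · obtain ⟨t, ht⟩ := factor_pi τ ℓ
          ((cv f (ℓ + 1)).comp ((ρ (ℓ + 1)).comp (τ.E.fwd ℓ)) - (cv f ℓ).comp (ρ ℓ)) (by
            intro b
            simp only [LinearMap.sub_apply, LinearMap.comp_apply]
            rw [← τ.ι.comm_fwd, hρ, hρ, cv_fwd, if_pos ⟨he, hs⟩, sub_self])
        refine ⟨t, fun _ _ v => ?_, fun h => by simp [he] at h⟩
        have := ht v
        simp only [LinearMap.sub_apply, LinearMap.comp_apply] at this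
        rw [← this]; ring
      · exact ⟨0, fun _ h => absurd h hs, fun h => by simp [he] at h⟩
    · rw [Bool.not_eq_true] at he
      by_cases hs : Sp n f ℓ
      · obtain ⟨t, ht⟩ := factor_pi τ (ℓ + 1)
          ((cv f ℓ).comp ((ρ ℓ).comp (τ.E.bwd ℓ)) - (cv f (ℓ + 1)).comp (ρ (ℓ + 1))) (by
            intro b
            simp only [LinearMap.sub_apply, LinearMap.comp_apply]
            rw [← τ.ι.comm_bwd, hρ, hρ, cv_bwd, if_pos ⟨he, hs⟩, sub_self])
        refine ⟨t, fun h => by simp [he] at h, fun _ _ v => ?_⟩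
        have := ht v
        simp only [LinearMap.sub_apply, LinearMap.comp_apply] at this
        rw [← this]; ring
      · exact ⟨0, fun h => by simp [he] at h, fun _ h => absurd h hs⟩
  choose θ hθ using hθ
  exact ⟨ρ, θ, hρ, fun ℓ => (hθ ℓ).1, fun ℓ => (hθ ℓ).2⟩

theorem splits_of_coB {e f : ℕ × ℕ} {τ : SES (II k n ε f) (II k n ε e)} {ρ θ h}
    (hc : IsCoc τ ρ θ) (hh : CoB n ε e f θ h) : τ.Splits := by
  obtain ⟨c0, c1, c2⟩ := hc
  obtain ⟨h0, h1, h2⟩ := hh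
  refine ⟨homTo f (fun x => (cv f x).comp (ρ x) + h x • (cv e x).comp (τ.π.app x)) ?_ ?_ ?_, ?_⟩
  · intro x hx v
    simp [cv_out hx, h0 x (fun h => hx h.2)]
  · intro ℓ he hs v
    simp only [LinearMap.add_apply, LinearMap.comp_apply, LinearMap.smul_apply, smul_eq_mul]
    rw [c1 ℓ he hs, τ.π.comm_fwd, cv_fwd]
    by_cases hse : Sp n e ℓ
    · rw [h1 ℓ he hse hs]
      by_cases hse' : Sp n e (ℓ + 1)
      · rw [if_pos ⟨he, hse'⟩]; ring
      · rw [h0 (ℓ + 1) (fun h => hse' h.1)]; ring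
    · rw [cv_out hse]; simp
  · intro ℓ he hs v
    simp only [LinearMap.add_apply, LinearMap.comp_apply, LinearMap.smul_apply, smul_eq_mul]
    rw [c2 ℓ he hs, τ.π.comm_bwd, cv_bwd]
    by_cases hse : Sp n e (ℓ + 1)
    · rw [h2 ℓ he hse hs]
      by_cases hse' : Sp n e ℓ
      · rw [if_pos ⟨he, hse'⟩]; ring
      · rw [h0 ℓ (fun h => hse' h.1)]; ring
    · rw [cv_out hse]; simp
  · intro x v
    apply cv_inj
    rw [cv_homTo]
    simp [c0, pi_iota]

/-- existence of coboundaries -/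
theorem coB_exists {e f : ℕ × ℕ} (he : ValidPair n e) (hf : ValidPair n f) (θ : ℕ → k)
    (hX : max e.1 f.1 < min e.2 f.2) (hO : ¬Ovl ε e f) : ∃ h, CoB n ε e f θ h := by
  unfold ValidPair at he hf
  let η : ℕ → k := fun ℓ => if ε ℓ = true then -θ ℓ else θ ℓ
  have hη1 : ∀ ℓ, ε ℓ = true → η ℓ = -θ ℓ := fun ℓ h => if_pos h
  have hη2 : ∀ ℓ, ε ℓ = false → η ℓ = θ ℓ := fun ℓ h => if_neg (by simp [h])
  by_cases hP : (e.1 < f.1 ∧ ε f.1 = true) ∨ (f.1 < e.1 ∧ ε e.1 = false)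
  · have hQ : ¬((e.2 < f.2 ∧ ε e.2 = true) ∨ (f.2 < e.2 ∧ ε f.2 = false)) :=
      fun h => hO ⟨hX, hP, h⟩
    let h : ℕ → k := fun x => if max e.1 f.1 < x ∧ x ≤ min e.2 f.2 then
      ∑ i ∈ Finset.Ico (max e.1 f.1) x, η i else 0
    have key : ∀ ℓ, max e.1 f.1 ≤ ℓ → ℓ < min e.2 f.2 → h (ℓ + 1) = h ℓ + η ℓ := by
      intro ℓ h1 h2
      simp only [h]
      rw [if_pos (by omega), Finset.sum_Ico_succ_top h1]
      rcases eq_or_lt_of_le h1 with h3 | h3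
      · rw [if_neg (by omega), h3]; simp
      · rw [if_pos (by omega)]
    refine ⟨h, ?_, ?_, ?_⟩
    · intro x hx
      simp only [sp_iff] at hx
      exact if_neg (by omega)
    · intro ℓ hε h1 h2
      simp only [sp_iff] at h1 h2
      have hne : ℓ ≠ min e.2 f.2 := by
        intro heq
        have h3 : ℓ = e.2 := by omega
        rw [h3] at hε
        exact hQ (Or.inl ⟨by omega, hε⟩)
      rw [key ℓ (by omega) (by omega), hη1 ℓ hε]; ring
    · intro ℓ hε h1 h2
      simp only [sp_iff] at h1 h2
      have hne : ℓ ≠ min e.2 f.2 := by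
        intro heq
        have h3 : ℓ = f.2 := by omega
        rw [h3] at hε
        exact hQ (Or.inr ⟨by omega, hε⟩)
      rw [key ℓ (by omega) (by omega), hη2 ℓ hε]; ring
  · let h : ℕ → k := fun x => if max e.1 f.1 < x ∧ x ≤ min e.2 f.2 then
      -∑ i ∈ Finset.Ico x (min e.2 f.2 + 1), η i else 0
    have key : ∀ ℓ, max e.1 f.1 < ℓ → ℓ ≤ min e.2 f.2 → h (ℓ + 1) = h ℓ + η ℓ := by
      intro ℓ h1 h2
      simp only [h]
      rw [if_pos (show max e.1 f.1 < ℓ ∧ ℓ ≤ min e.2 f.2 by omega),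
        Finset.sum_eq_sum_Ico_succ_bot (show ℓ < min e.2 f.2 + 1 by omega)]
      rcases eq_or_lt_of_le h2 with h3 | h3
      · rw [if_neg (by omega), h3]; simp
      · rw [if_pos (by omega)]; ring
    refine ⟨h, ?_, ?_, ?_⟩
    · intro x hx
      simp only [sp_iff] at hx
      exact if_neg (by omega)
    · intro ℓ hε h1 h2
      simp only [sp_iff] at h1 h2
      have hne : ℓ ≠ max e.1 f.1 := by
        intro heq
        have h3 : ℓ = f.1 := by omega
        rw [h3] at hε
        exact hP (Or.inl ⟨by omega, hε⟩)
      rw [key ℓ (by omega) (by omega), hη1 ℓ hε]; ring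
    · intro ℓ hε h1 h2
      simp only [sp_iff] at h1 h2
      have hne : ℓ ≠ max e.1 f.1 := by
        intro heq
        have h3 : ℓ = e.1 := by omega
        rw [h3] at hε
        exact hP (Or.inr ⟨by omega, hε⟩)
      rw [key ℓ (by omega) (by omega), hη2 ℓ hε]; ring

/-- overlap extensions are not coboundaries -/
theorem coB_none {e f : ℕ × ℕ} (he : ValidPair n e) (hf : ValidPair n f) (θ h : ℕ → k)
    (hO : Ovl ε e f) (hθ : ∀ ℓ, θ ℓ = if ℓ = min e.2 f.2 then 1 else 0) :
    ¬CoB n ε e f θ h := by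
  unfold ValidPair at he hf
  obtain ⟨hX, hP, hQ⟩ := hO
  rintro ⟨h0, h1, h2⟩
  have step : ∀ ℓ, max e.1 f.1 ≤ ℓ → ℓ < min e.2 f.2 → h (ℓ + 1) = h ℓ := by
    intro ℓ a1 a2
    have hz : θ ℓ = 0 := by rw [hθ, if_neg (by omega)]
    rcases Bool.eq_false_or_eq_true (ε ℓ) with hε | hε
    · have hs : Sp n e ℓ := by
        rw [sp_iff]
        by_contra hn
        rcases hP with hP | hP
        · omega
        · have : ℓ = e.1 := by omega
          rw [this, hP.2] at hε
          exact Bool.noConfusion hε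
      have := h1 ℓ hε hs (by rw [sp_iff]; omega)
      rw [hz] at this
      exact (sub_eq_zero.1 this.symm).symm
    · have hs : Sp n f ℓ := by
        rw [sp_iff]
        by_contra hn
        rcases hP with hP | hP
        · have : ℓ = f.1 := by omega
          rw [this, hP.2] at hε
          exact Bool.noConfusion hε
        · omega
      have := h2 ℓ hε (by rw [sp_iff]; omega) hs
      rw [hz] at this
      exact sub_eq_zero.1 this.symm
  have all : ∀ d, max e.1 f.1 + d ≤ min e.2 f.2 → h (max e.1 f.1 + d) = 0 := by
    intro d
    induction d with
    | zero => intro _; exact h0 _ (by rw [sp_iff, sp_iff]; omega)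
    | succ d ih =>
      intro hd
      rw [← ih (by omega)]
      exact step (max e.1 f.1 + d) (by omega) (by omega)
  have hq : h (min e.2 f.2) = 0 := by
    have := all (min e.2 f.2 - max e.1 f.1) (by omega)
    rwa [show max e.1 f.1 + (min e.2 f.2 - max e.1 f.1) = min e.2 f.2 by omega] at this
  have hq' : h (min e.2 f.2 + 1) = 0 := h0 _ (by rw [sp_iff, sp_iff]; omega)
  have hone : θ (min e.2 f.2) = 1 := by rw [hθ, if_pos rfl]
  rcases hQ with hQ | hQ
  · have := h1 (min e.2 f.2) (by rw [show min e.2 f.2 = e.2 by omega]; exact hQ.2)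
      (by rw [sp_iff]; omega) (by rw [sp_iff]; omega)
    rw [hone, hq, hq', sub_zero] at this
    exact one_ne_zero this
  · have := h2 (min e.2 f.2) (by rw [show min e.2 f.2 = f.2 by omega]; exact hQ.2)
      (by rw [sp_iff]; omega) (by rw [sp_iff]; omega)
    rw [hone, hq, hq', sub_zero] at this
    exact one_ne_zero this

/-- the extension attached to a cocycle -/
def tw (k : Type) [Field k] (n : ℕ) (ε : ℕ → Bool) (e f : ℕ × ℕ) (θ : ℕ → k) : ARep k n ε where
  V x := (II k n ε f).V x × (II k n ε e).V x
  acg _ := by infer_instance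
  mod _ := by infer_instance
  fdim _ := by infer_instance
  triv x hx v := Prod.ext ((II k n ε f).triv x hx v.1) ((II k n ε e).triv x hx v.2)
  fwd ℓ := if ε ℓ = true then (((II k n ε f).fwd ℓ).coprod
      (θ ℓ • (mkI f (ℓ + 1)).comp (cv e ℓ))).prod
        (((II k n ε e).fwd ℓ).comp (LinearMap.snd k _ _)) else 0
  bwd ℓ := if ε ℓ = true then 0 else (((II k n ε f).bwd ℓ).coprod
      (θ ℓ • (mkI f ℓ).comp (cv e (ℓ + 1)))).prod
        (((II k n ε e).bwd ℓ).comp (LinearMap.snd k _ _))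
  fwd_zero ℓ h := by simp [h]
  bwd_zero ℓ h := by simp [h]

def twρ (e f : ℕ × ℕ) (θ : ℕ → k) (x : ℕ) : (tw k n ε e f θ).V x →ₗ[k] (II k n ε f).V x :=
  LinearMap.fst k _ _

def twπ (e f : ℕ × ℕ) (θ : ℕ → k) (x : ℕ) : (tw k n ε e f θ).V x →ₗ[k] (II k n ε e).V x :=
  LinearMap.snd k _ _

def twm (e f : ℕ × ℕ) (θ : ℕ → k) (x : ℕ) (b : (II k n ε f).V x) (a : (II k n ε e).V x) :
    (tw k n ε e f θ).V x := (b, a)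

theorem twρ_m (e f : ℕ × ℕ) (θ : ℕ → k) (x) (b : (II k n ε f).V x) (a : (II k n ε e).V x) :
    twρ e f θ x (twm e f θ x b a) = b := rfl
theorem twπ_m (e f : ℕ × ℕ) (θ : ℕ → k) (x) (b : (II k n ε f).V x) (a : (II k n ε e).V x) :
    twπ e f θ x (twm e f θ x b a) = a := rfl

theorem tw_ext {e f : ℕ × ℕ} {θ : ℕ → k} {x} {v w : (tw k n ε e f θ).V x}
    (h1 : twρ e f θ x v = twρ e f θ x w) (h2 : twπ e f θ x v = twπ e f θ x w) : v = w :=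
  Prod.ext h1 h2

theorem twρ_fwd {e f : ℕ × ℕ} {θ : ℕ → k} {ℓ} (hε : ε ℓ = true) (v : (tw k n ε e f θ).V ℓ) :
    twρ e f θ (ℓ + 1) ((tw k n ε e f θ).fwd ℓ v) =
      (II k n ε f).fwd ℓ (twρ e f θ ℓ v) +
        θ ℓ • mkI f (ℓ + 1) (cv e ℓ (twπ e f θ ℓ v)) := by
  have : (tw k n ε e f θ).fwd ℓ = (((II k n ε f).fwd ℓ).coprod
      (θ ℓ • (mkI f (ℓ + 1)).comp (cv e ℓ))).prod
        (((II k n ε e).fwd ℓ).comp (LinearMap.snd k _ _)) := if_pos hε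
  rw [this]
  rfl

theorem twρ_bwd {e f : ℕ × ℕ} {θ : ℕ → k} {ℓ} (hε : ε ℓ = false)
    (v : (tw k n ε e f θ).V (ℓ + 1)) :
    twρ e f θ ℓ ((tw k n ε e f θ).bwd ℓ v) =
      (II k n ε f).bwd ℓ (twρ e f θ (ℓ + 1) v) +
        θ ℓ • mkI f ℓ (cv e (ℓ + 1) (twπ e f θ (ℓ + 1) v)) := by
  have : (tw k n ε e f θ).bwd ℓ = (((II k n ε f).bwd ℓ).coprod
      (θ ℓ • (mkI f ℓ).comp (cv e (ℓ + 1)))).prod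
        (((II k n ε e).bwd ℓ).comp (LinearMap.snd k _ _)) := if_neg (by simp [hε])
  rw [this]
  rfl

theorem twπ_fwd {e f : ℕ × ℕ} {θ : ℕ → k} {ℓ} (v : (tw k n ε e f θ).V ℓ) :
    twπ e f θ (ℓ + 1) ((tw k n ε e f θ).fwd ℓ v) = (II k n ε e).fwd ℓ (twπ e f θ ℓ v) := by
  by_cases hε : ε ℓ = true
  · have : (tw k n ε e f θ).fwd ℓ = (((II k n ε f).fwd ℓ).coprod
      (θ ℓ • (mkI f (ℓ + 1)).comp (cv e ℓ))).prod
        (((II k n ε e).fwd ℓ).comp (LinearMap.snd k _ _)) := if_pos hε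
    rw [this]
    rfl
  · rw [(tw k n ε e f θ).fwd_zero ℓ (by simpa using hε),
      (II k n ε e).fwd_zero ℓ (by simpa using hε)]
    simp

theorem twπ_bwd {e f : ℕ × ℕ} {θ : ℕ → k} {ℓ} (v : (tw k n ε e f θ).V (ℓ + 1)) :
    twπ e f θ ℓ ((tw k n ε e f θ).bwd ℓ v) = (II k n ε e).bwd ℓ (twπ e f θ (ℓ + 1) v) := by
  by_cases hε : ε ℓ = true
  · rw [(tw k n ε e f θ).bwd_zero ℓ hε, (II k n ε e).bwd_zero ℓ hε]
    simp
  · have : (tw k n ε e f θ).bwd ℓ = (((II k n ε f).bwd ℓ).coprod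
      (θ ℓ • (mkI f ℓ).comp (cv e (ℓ + 1)))).prod
        (((II k n ε e).bwd ℓ).comp (LinearMap.snd k _ _)) := if_neg hε
    rw [this]
    rfl

/-- the short exact sequence attached to a cocycle -/
def twS (k : Type) [Field k] (n : ℕ) (ε : ℕ → Bool) (e f : ℕ × ℕ) (θ : ℕ → k) :
    SES (II k n ε f) (II k n ε e) where
  E := tw k n ε e f θ
  ι :=
    { app := fun x => LinearMap.inl k _ _
      comm_fwd := fun ℓ b => by
        by_cases hε : ε ℓ = true
        · apply tw_ext
          · rw [twρ_fwd hε]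
            show (II k n ε f).fwd ℓ b = (II k n ε f).fwd ℓ b + θ ℓ • mkI f (ℓ + 1) (cv e ℓ 0)
            simp
          · rw [twπ_fwd]
            show 0 = (II k n ε e).fwd ℓ 0
            simp
        · rw [(tw k n ε e f θ).fwd_zero ℓ (by simpa using hε),
            (II k n ε f).fwd_zero ℓ (by simpa using hε)]
          exact map_zero (LinearMap.inl k _ _)
      comm_bwd := fun ℓ b => by
        by_cases hε : ε ℓ = true
        · rw [(tw k n ε e f θ).bwd_zero ℓ hε, (II k n ε f).bwd_zero ℓ hε]
          exact map_zero (LinearMap.inl k _ _)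
        · rw [Bool.not_eq_true] at hε
          apply tw_ext
          · rw [twρ_bwd hε]
            show (II k n ε f).bwd ℓ b = (II k n ε f).bwd ℓ b + θ ℓ • mkI f ℓ (cv e (ℓ + 1) 0)
            simp
          · rw [twπ_bwd]
            show 0 = (II k n ε e).bwd ℓ 0
            simp }
  π := ⟨twπ e f θ, fun _ v => twπ_fwd v, fun _ v => twπ_bwd v⟩
  inj x := fun v w h => congrArg Prod.fst h
  surj x := fun a => ⟨twm e f θ x 0 a, rfl⟩
  exct x v := by
    constructor
    · intro h
      exact ⟨twρ e f θ x v, Prod.ext rfl h.symm⟩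
    · rintro ⟨u, rfl⟩
      rfl

theorem tw_coc (e f : ℕ × ℕ) (θ : ℕ → k) :
    IsCoc (twS k n ε e f θ) (twρ e f θ) θ := by
  refine ⟨fun x b => rfl, ?_, ?_⟩
  · intro ℓ hε hs v
    refine (congrArg _ (twρ_fwd hε v)).trans ?_
    rw [map_add, map_smul, cv_fwd, if_pos ⟨hε, hs⟩, cv_mk, if_pos hs]
    rfl
  · intro ℓ hε hs v
    refine (congrArg _ (twρ_bwd hε v)).trans ?_
    rw [map_add, map_smul, cv_bwd, if_pos ⟨hε, hs⟩, cv_mk, if_pos hs]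
    rfl

theorem coB_of_splits {e f : ℕ × ℕ} {τ : SES (II k n ε f) (II k n ε e)} {ρ θ}
    (hc : IsCoc τ ρ θ) (hs : τ.Splits) : ∃ h, CoB n ε e f θ h := by
  obtain ⟨c0, c1, c2⟩ := hc
  obtain ⟨r, hr⟩ := hs
  have hh : ∀ x, ∃ t : k, ∀ v, cv f x (r.app x v) - cv f x (ρ x v) = t * cv e x (τ.π.app x v) := by
    intro x
    obtain ⟨t, ht⟩ := factor_pi τ x ((cv f x).comp (r.app x) - (cv f x).comp (ρ x)) (by
      intro b
      simp [hr, c0])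
    exact ⟨t, fun v => by simpa using ht v⟩
  choose g hg using hh
  have hsec : ∀ x, ∃ s, τ.π.app x s = mkI e x 1 := fun x => τ.surj x _
  refine ⟨fun x => if Sp n e x ∧ Sp n f x then g x else 0, fun x hx => if_neg hx, ?_, ?_⟩
  · intro ℓ hε h1 h2
    obtain ⟨s, hs⟩ := hsec ℓ
    have a1 := hg ℓ s
    have a2 := hg (ℓ + 1) (τ.E.fwd ℓ s)
    have hg0 : ¬Sp n f ℓ → g ℓ = 0 := by
      intro hn
      rw [cv_out hn, cv_out hn, hs, cv_mk, if_pos h1] at a1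
      simpa using a1.symm
    rw [c1 ℓ hε h2, r.comm_fwd, cv_fwd, if_pos ⟨hε, h2⟩, τ.π.comm_fwd, cv_fwd, hs, cv_mk,
      if_pos h1] at a2
    rw [hs, cv_mk, if_pos h1] at a1
    have e1 : (if Sp n e ℓ ∧ Sp n f ℓ then g ℓ else 0) = g ℓ := by
      split_ifs with h
      · rfl
      · exact (hg0 (fun h' => h ⟨h1, h'⟩)).symm
    have e2 : (if Sp n e (ℓ + 1) ∧ Sp n f (ℓ + 1) then g (ℓ + 1) else 0) =
        g (ℓ + 1) * (if ε ℓ = true ∧ Sp n e (ℓ + 1) then 1 else 0) := by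
      simp [hε, h2]
    beta_reduce
    rw [e1, e2]
    linear_combination a1 - a2
  · intro ℓ hε h1 h2
    obtain ⟨s, hs⟩ := hsec (ℓ + 1)
    have a1 := hg (ℓ + 1) s
    have a2 := hg ℓ (τ.E.bwd ℓ s)
    have hg0 : ¬Sp n f (ℓ + 1) → g (ℓ + 1) = 0 := by
      intro hn
      rw [cv_out hn, cv_out hn, hs, cv_mk, if_pos h1] at a1
      simpa using a1.symm
    rw [c2 ℓ hε h2, r.comm_bwd, cv_bwd, if_pos ⟨hε, h2⟩, τ.π.comm_bwd, cv_bwd, hs, cv_mk,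
      if_pos h1] at a2
    rw [hs, cv_mk, if_pos h1] at a1
    have e1 : (if Sp n e (ℓ + 1) ∧ Sp n f (ℓ + 1) then g (ℓ + 1) else 0) = g (ℓ + 1) := by
      split_ifs with h
      · rfl
      · exact (hg0 (fun h' => h ⟨h1, h'⟩)).symm
    have e2 : (if Sp n e ℓ ∧ Sp n f ℓ then g ℓ else 0) =
        g ℓ * (if ε ℓ = false ∧ Sp n e ℓ then 1 else 0) := by
      simp [hε, h2]
    beta_reduce
    rw [e1, e2]
    linear_combination a1 - a2

theorem not_cmp {e f : ℕ × ℕ} (he : ValidPair n e) (hf : ValidPair n f) (hO : Ovl ε e f) :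
    ¬Cmp (II k n ε e) (II k n ε f) := by
  rintro (h | ⟨σ, _, h2, _⟩)
  · obtain ⟨g, hg⟩ := coB_of_splits
      (tw_coc e f (fun ℓ => if ℓ = min e.2 f.2 then (1 : k) else 0)) (h _)
    exact coB_none he hf _ g hO (fun _ => rfl) hg
  · unfold ValidPair at he hf
    have hX := hO.1
    have s1 : Sp n e (min e.2 f.2) := by rw [sp_iff]; omega
    have s2 : Sp n f (min e.2 f.2) := by rw [sp_iff]; omega
    have d := indec_dim h2 (min e.2 f.2)
    have r := LinearMap.finrank_range_add_finrank_ker (σ.π.app (min e.2 f.2))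
    rw [LinearMap.range_eq_top.2 (σ.surj _), finrank_top] at r
    have p1 := finrank_II_pos (k := k) (ε := ε) s1
    have : Nontrivial (LinearMap.ker (σ.π.app (min e.2 f.2))) := by
      refine ⟨⟨⟨_, LinearMap.mem_ker.2 (pi_iota σ _ (mkI f _ 1))⟩, 0, ?_⟩⟩
      intro h
      have h' := congrArg Subtype.val h
      exact II_ne s2 (σ.inj _ (h'.trans (map_zero _).symm))
    have p2 : 0 < Module.finrank k (LinearMap.ker (σ.π.app (min e.2 f.2))) := Module.finrank_pos
    omega

end PartD
end CambrianA

namespace CambrianA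
section PartD2
variable {k : Type} [Field k] {n : ℕ} {ε : ℕ → Bool}

/-- arrows which can carry a cocycle -/
def Rel (n : ℕ) (ε : ℕ → Bool) (e f : ℕ × ℕ) (ℓ : ℕ) : Prop :=
  (ε ℓ = true ∧ Sp n e ℓ ∧ Sp n f (ℓ + 1)) ∨ (ε ℓ = false ∧ Sp n e (ℓ + 1) ∧ Sp n f ℓ)

theorem coB_zero {e f : ℕ × ℕ} {θ : ℕ → k} (h : ∀ ℓ, Rel n ε e f ℓ → θ ℓ = 0) :
    CoB n ε e f θ (fun _ => 0) := by
  refine ⟨fun _ _ => rfl, fun ℓ h1 h2 h3 => ?_, fun ℓ h1 h2 h3 => ?_⟩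
  · rw [h ℓ (Or.inl ⟨h1, h2, h3⟩)]; simp
  · rw [h ℓ (Or.inr ⟨h1, h2, h3⟩)]; simp

/-- the cocycle concentrated at one arrow -/
def dl (k : Type) [Field k] (a : ℕ) : ℕ → k := fun ℓ => if ℓ = a then 1 else 0

theorem rel_pos {e f : ℕ × ℕ} (hX : min e.2 f.2 ≤ max e.1 f.1) {a : ℕ} (h : Rel n ε e f a) :
    (ε a = true ∧ e.1 < a ∧ e.2 = a ∧ f.1 = a ∧ a < f.2) ∨
    (ε a = false ∧ f.1 < a ∧ f.2 = a ∧ e.1 = a ∧ a < e.2) := by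
  rcases h with ⟨h1, h2, h3⟩ | ⟨h1, h2, h3⟩
  · left
    rw [sp_iff] at h2 h3
    refine ⟨h1, ?_⟩
    omega
  · right
    rw [sp_iff] at h2 h3
    refine ⟨h1, ?_⟩
    omega

theorem tw_indec {e f : ℕ × ℕ} (he : ValidPair n e) (hf : ValidPair n f)
    (hX : min e.2 f.2 ≤ max e.1 f.1) {a : ℕ} (h : Rel n ε e f a) :
    (tw k n ε e f (dl k a)).Indec := by
  unfold ValidPair at he hf
  have hp := rel_pos hX h
  have hdis : ∀ x, ¬Sp n e x ∨ ¬Sp n f x := by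
    intro x
    rw [sp_iff, sp_iff]
    omega
  have hun : ∀ x, Sp n (min e.1 f.1, max e.2 f.2) x ↔ (Sp n e x ∨ Sp n f x) := by
    intro x
    rw [sp_iff, sp_iff, sp_iff]
    dsimp only
    omega
  refine indec_iso (A := II k n ε (min e.1 f.1, max e.2 f.2)) ?_
    (II_indec ⟨by dsimp only; omega, by dsimp only; omega⟩)
  apply iso_symm
  refine ⟨homTo _ (fun x => (cv f x).comp (twρ e f (dl k a) x) + (cv e x).comp (twπ e f (dl k a) x))
    ?_ ?_ ?_, ?_⟩
  · intro x hx v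
    rw [hun, not_or] at hx
    simp [cv_out hx.1, cv_out hx.2]
  · intro ℓ hε hs v
    simp only [LinearMap.add_apply, LinearMap.comp_apply]
    rw [twρ_fwd hε, twπ_fwd, map_add, map_smul, cv_mk, cv_fwd, cv_fwd]
    have hc : (Sp n f (ℓ + 1) ∧ ¬Sp n e (ℓ + 1) ∧ (ℓ = a ∨ ¬Sp n e ℓ)) ∨
        (¬Sp n f (ℓ + 1) ∧ Sp n e (ℓ + 1) ∧ ¬Sp n f ℓ) := by
      rw [hun] at hs
      have hne : ε a = false → ℓ ≠ a := by
        rintro h1 rfl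
        rw [h1] at hε
        exact Bool.noConfusion hε
      simp only [sp_iff] at hs ⊢
      rcases hp with hp | hp
      · omega
      · have := hne hp.1
        omega
    rcases hc with ⟨h1, h2, rfl | h3⟩ | ⟨h1, h2, h3⟩
    · simp [h1, h2, hε, dl]
    · simp [h1, h2, hε, cv_out h3]
    · simp [h1, h2, hε, cv_out h3]
  · intro ℓ hε hs v
    simp only [LinearMap.add_apply, LinearMap.comp_apply]
    rw [twρ_bwd hε, twπ_bwd, map_add, map_smul, cv_mk, cv_bwd, cv_bwd]
    have hc : (Sp n f ℓ ∧ ¬Sp n e ℓ ∧ (ℓ = a ∨ ¬Sp n e (ℓ + 1))) ∨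
        (¬Sp n f ℓ ∧ Sp n e ℓ ∧ ¬Sp n f (ℓ + 1)) := by
      rw [hun] at hs
      have hne : ε a = true → ℓ ≠ a := by
        rintro h1 rfl
        rw [h1] at hε
        exact Bool.noConfusion hε
      simp only [sp_iff] at hs ⊢
      rcases hp with hp | hp
      · have := hne hp.1
        omega
      · omega
    rcases hc with ⟨h1, h2, rfl | h3⟩ | ⟨h1, h2, h3⟩
    · simp [h1, h2, hε, dl]
    · simp [h1, h2, hε, cv_out h3]
    · simp [h1, h2, hε, cv_out h3]
  · intro x
    constructor
    · intro v w hvw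
      have := congrArg (cv _ x) hvw
      rw [cv_homTo, cv_homTo] at this
      simp only [LinearMap.add_apply, LinearMap.comp_apply] at this
      rcases hdis x with hd | hd
      · apply tw_ext
        · apply cv_inj
          simpa [cv_out hd] using this
        · apply cv_inj
          rw [cv_out hd, cv_out hd]
      · apply tw_ext
        · apply cv_inj
          rw [cv_out hd, cv_out hd]
        · apply cv_inj
          simpa [cv_out hd] using this
    · intro u
      refine ⟨twm e f (dl k a) x (mkI f x (cv _ x u)) (mkI e x (cv _ x u)), ?_⟩
      apply cv_inj
      rw [cv_homTo]
      simp only [LinearMap.add_apply, LinearMap.comp_apply, twρ_m, twπ_m, cv_mk]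
      by_cases h1 : Sp n e x
      · have h2 : ¬Sp n f x := fun h2 => (hdis x).elim (fun h => h h1) (fun h => h h2)
        simp [h1, h2]
      · by_cases h2 : Sp n f x
        · simp [h1, h2]
        · rw [cv_out (fun h => ((hun x).1 h).elim h1 h2)]
          simp

/-- comparison of an extension with the standard one -/
def cmpHom {e f : ℕ × ℕ} {τ : SES (II k n ε f) (II k n ε e)} {ρ θ} (hc : IsCoc τ ρ θ) (a : ℕ)
    (hu : ∀ ℓ, Rel n ε e f ℓ → ℓ = a) : τ.E.Hom (tw k n ε e f (dl k a)) where
  app x := (ρ x).prod (θ a • τ.π.app x)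
  comm_fwd ℓ v := by
    by_cases hε : ε ℓ = true
    · apply tw_ext
      · rw [twρ_fwd hε]
        show ρ (ℓ + 1) (τ.E.fwd ℓ v) = (II k n ε f).fwd ℓ (ρ ℓ v) +
          dl k a ℓ • mkI f (ℓ + 1) (cv e ℓ (θ a • τ.π.app ℓ v))
        apply cv_inj
        by_cases hs : Sp n f (ℓ + 1)
        · rw [hc.2.1 ℓ hε hs, map_add, map_smul, cv_fwd, if_pos ⟨hε, hs⟩, cv_mk, if_pos hs]
          by_cases he : Sp n e ℓ
          · obtain rfl := hu ℓ (Or.inl ⟨hε, he, hs⟩)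
            simp [dl]
          · simp [cv_out he]
        · rw [cv_out hs, cv_out hs]
      · rw [twπ_fwd]
        show θ a • τ.π.app (ℓ + 1) (τ.E.fwd ℓ v) = (II k n ε e).fwd ℓ (θ a • τ.π.app ℓ v)
        rw [τ.π.comm_fwd, map_smul]
    · rw [(tw k n ε e f (dl k a)).fwd_zero ℓ (by simpa using hε),
        τ.E.fwd_zero ℓ (by simpa using hε)]
      exact map_zero ((ρ (ℓ + 1)).prod (θ a • τ.π.app (ℓ + 1)))
  comm_bwd ℓ v := by
    by_cases hε : ε ℓ = true
    · rw [(tw k n ε e f (dl k a)).bwd_zero ℓ hε, τ.E.bwd_zero ℓ hε]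
      exact map_zero ((ρ ℓ).prod (θ a • τ.π.app ℓ))
    · rw [Bool.not_eq_true] at hε
      apply tw_ext
      · rw [twρ_bwd hε]
        show ρ ℓ (τ.E.bwd ℓ v) = (II k n ε f).bwd ℓ (ρ (ℓ + 1) v) +
          dl k a ℓ • mkI f ℓ (cv e (ℓ + 1) (θ a • τ.π.app (ℓ + 1) v))
        apply cv_inj
        by_cases hs : Sp n f ℓ
        · rw [hc.2.2 ℓ hε hs, map_add, map_smul, cv_bwd, if_pos ⟨hε, hs⟩, cv_mk, if_pos hs]
          by_cases he : Sp n e (ℓ + 1)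
          · obtain rfl := hu ℓ (Or.inr ⟨hε, he, hs⟩)
            simp [dl]
          · simp [cv_out he]
        · rw [cv_out hs, cv_out hs]
      · rw [twπ_bwd]
        show θ a • τ.π.app ℓ (τ.E.bwd ℓ v) = (II k n ε e).bwd ℓ (θ a • τ.π.app (ℓ + 1) v)
        rw [τ.π.comm_bwd, map_smul]

theorem cmpHom_bij {e f : ℕ × ℕ} {τ : SES (II k n ε f) (II k n ε e)} {ρ θ} (hc : IsCoc τ ρ θ)
    (a : ℕ) (hu : ∀ ℓ, Rel n ε e f ℓ → ℓ = a) (h0 : θ a ≠ 0) (x) :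
    Function.Bijective ((cmpHom hc a hu).app x) := by
  constructor
  · rw [injective_iff_map_eq_zero]
    intro v hv
    have h1 : ρ x v = 0 := congrArg Prod.fst hv
    have h2 : θ a • τ.π.app x v = 0 := congrArg Prod.snd hv
    have h3 : τ.π.app x v = 0 := (smul_eq_zero.1 h2).resolve_left h0
    obtain ⟨u, rfl⟩ := (τ.exct x v).1 h3
    rw [hc.1] at h1
    rw [h1, map_zero]
  · intro w
    obtain ⟨s, hs⟩ := τ.surj x ((θ a)⁻¹ • twπ e f _ x w)
    refine ⟨s + τ.ι.app x (twρ e f _ x w - ρ x s), tw_ext ?_ ?_⟩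
    · show ρ x _ = _
      rw [map_add, hc.1]
      abel
    · show θ a • τ.π.app x _ = _
      rw [map_add, pi_iota, hs, add_zero, smul_smul, mul_inv_cancel₀ h0, one_smul]

theorem cmp_of {e f : ℕ × ℕ} (he : ValidPair n e) (hf : ValidPair n f) (hO : ¬Ovl ε e f) :
    Cmp (II k n ε e) (II k n ε f) := by
  by_cases hX : max e.1 f.1 < min e.2 f.2
  · left
    intro τ
    obtain ⟨ρ, θ, hc⟩ := exists_coc τ
    obtain ⟨h, hh⟩ := coB_exists he hf θ hX hO
    exact splits_of_coB hc hh
  rw [not_lt] at hX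
  by_cases hR : ∃ a, Rel n ε e f a
  · right
    obtain ⟨a, ha⟩ := hR
    have hu : ∀ ℓ, Rel n ε e f ℓ → ℓ = a := by
      intro ℓ hℓ
      have h1 := rel_pos hX ha
      have h2 := rel_pos hX hℓ
      omega
    refine ⟨twS k n ε e f (dl k a), ?_, tw_indec he hf hX ha, ?_⟩
    · intro hs
      obtain ⟨h, h0, h1, h2⟩ := coB_of_splits (tw_coc e f (dl k a)) hs
      have hz : ∀ x, h x = 0 := by
        intro x
        apply h0
        rw [sp_iff, sp_iff]
        omega
      have h3 : dl k a a = 0 := by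
        rcases ha with ha | ha
        · rw [h1 a ha.1 ha.2.1 ha.2.2, hz, hz, sub_zero]
        · rw [h2 a ha.1 ha.2.1 ha.2.2, hz, hz, sub_zero]
      simp [dl] at h3
    · intro τ hτ
      obtain ⟨ρ, θ, hc⟩ := exists_coc τ
      have h0 : θ a ≠ 0 := by
        intro h0
        apply hτ
        refine splits_of_coB hc (coB_zero fun ℓ hℓ => ?_)
        rw [hu ℓ hℓ, h0]
      have hb := cmpHom_bij hc a hu h0
      refine ⟨(θ a)⁻¹, inv_ne_zero h0, invHom (cmpHom hc a hu) hb, ?_, ?_, ?_⟩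
      · exact bij_of_inv _ (cmpHom hc a hu) (fun x v => invHom_right _ _ x v)
          (fun x v => invHom_left _ _ x v)
      · intro x v
        have : (twS k n ε e f (dl k a)).ι.app x v = (cmpHom hc a hu).app x (τ.ι.app x v) := by
          apply tw_ext
          · exact (hc.1 x v).symm
          · show 0 = θ a • τ.π.app x (τ.ι.app x v)
            rw [pi_iota, smul_zero]
        rw [this]
        exact invHom_left _ _ x _
      · intro x v
        obtain ⟨w, rfl⟩ := (hb x).2 v
        have : (invHom (cmpHom hc a hu) hb).app x ((cmpHom hc a hu).app x w) = w :=
          invHom_left _ _ x _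
        refine (congrArg (τ.π.app x) this).trans ?_
        show τ.π.app x w = (θ a)⁻¹ • (θ a • τ.π.app x w)
        rw [smul_smul, inv_mul_cancel₀ h0, one_smul]
  · left
    intro τ
    obtain ⟨ρ, θ, hc⟩ := exists_coc τ
    exact splits_of_coB hc (coB_zero fun ℓ hℓ => absurd ⟨ℓ, hℓ⟩ hR)

end PartD2
end CambrianA

namespace CambrianA
section PartE
variable {k : Type} [Field k] {n : ℕ} {ε : ℕ → Bool}

theorem ovl_of_cmp {e f : ℕ × ℕ} (he : ValidPair n e) (hf : ValidPair n f)
    (h : Cmp (II k n ε e) (II k n ε f)) : ¬Ovl ε e f := fun hO => not_cmp he hf hO h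

theorem ar_list {L : List (ℕ × ℕ)} (hL : ∀ e ∈ L, ValidPair n e) (hn : L.Nodup)
    (hO : ∀ e ∈ L, ∀ f ∈ L, ¬Ovl ε e f) :
    AlmostRigid (dsumList k n ε (L.map (II k n ε))) := by
  constructor
  · intro A hA hs
    rw [summand_iff_ret] at hs
    obtain ⟨e, he, hi⟩ := indec_II hA
    exact list_dbl hL he hn (ret_trans (iso_ret (iso_symm (iso_dsum hi hi))) hs)
  · intro A B hA hB hsA hsB
    rw [summand_iff_ret] at hsA hsB
    obtain ⟨e, he, hi⟩ := indec_II hA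
    obtain ⟨f, hf, hj⟩ := indec_II hB
    have h1 := (ret_list hL he).1 (ret_trans (iso_ret (iso_symm hi)) hsA)
    have h2 := (ret_list hL hf).1 (ret_trans (iso_ret (iso_symm hj)) hsB)
    exact cmp_iso (iso_symm hi) (iso_symm hj) (cmp_of he hf (hO e h1 f h2))

theorem nodup_of_ar {L : List (ℕ × ℕ)} (hL : ∀ e ∈ L, ValidPair n e)
    (h : AlmostRigid (dsumList k n ε (L.map (II k n ε)))) : L.Nodup := by
  rw [List.nodup_iff_sublist]
  intro a ha
  have hva : ValidPair n a := hL a (ha.subset (by simp))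
  refine h.1 (II k n ε a) (II_indec hva) ((summand_iff_ret).2 ?_)
  refine ret_trans ?_ (ret_sublist (ha.map (II k n ε)))
  exact ret_dsum (iso_ret (iso_refl _)) (ret_inl _ _)

theorem ovl_of_ar {T : ARep k n ε} (h : AlmostRigid T) {e f : ℕ × ℕ} (he : ValidPair n e)
    (hf : ValidPair n f) (h1 : Ret (II k n ε e) T) (h2 : Ret (II k n ε f) T) : ¬Ovl ε e f :=
  ovl_of_cmp (k := k) he hf (h.2 _ _ (II_indec he) (II_indec hf) (summand_iff_ret.2 h1)
    (summand_iff_ret.2 h2))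

theorem ret_F {S : Finset (ℕ × ℕ)} (hS : ∀ e ∈ S, ValidPair n e) {e : ℕ × ℕ}
    (he : ValidPair n e) : Ret (II k n ε e) (FRep k n ε S) ↔ e ∈ S := by
  have := ret_list (k := k) (ε := ε) (L := S.toList) (fun e h => hS e (Finset.mem_toList.1 h)) he
  rw [Finset.mem_toList] at this
  exact this

theorem mar_of_maxV {S : Finset (ℕ × ℕ)} (h : MaxV n ε S) : MaxAlmostRigid (FRep k n ε S) := by
  obtain ⟨h1, h2, h3⟩ := h
  constructor
  · refine ar_list (L := S.toList) ?_ S.nodup_toList ?_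
    · exact fun e he => h1 e (Finset.mem_toList.1 he)
    · exact fun e he f hf => h2 e (Finset.mem_toList.1 he) f (Finset.mem_toList.1 hf)
  · intro M hM hAR
    obtain ⟨e, he, hr⟩ := split_lemma M hM
    have hr2 := ret_trans hr (ret_inr (FRep k n ε S) M)
    have hmem : e ∈ S := by
      refine h3 e he fun f hf => ?_
      have hrf := ret_trans ((ret_F (k := k) (ε := ε) h1 (h1 f hf)).2 hf)
        (ret_inl (FRep k n ε S) M)
      exact ⟨ovl_of_ar hAR he (h1 f hf) hr2 hrf, ovl_of_ar hAR (h1 f hf) he hrf hr2⟩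
    exact hAR.1 _ (II_indec he)
      (summand_iff_ret.2 (ret_dsum ((ret_F (k := k) (ε := ε) h1 he).2 hmem) hr))

theorem F_inj {S S' : Finset (ℕ × ℕ)} (hS : ∀ e ∈ S, ValidPair n e)
    (hS' : ∀ e ∈ S', ValidPair n e) (h : (FRep k n ε S).Iso (FRep k n ε S')) : S = S' := by
  ext e
  constructor
  · intro he
    exact (ret_F hS' (hS e he)).1 (ret_trans ((ret_F hS (hS e he)).2 he) (iso_ret h))
  · intro he
    exact (ret_F hS (hS' e he)).1 (ret_trans ((ret_F hS' (hS' e he)).2 he) (iso_ret (iso_symm h)))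

theorem iso_swap (A B C : ARep k n ε) : (A.dsum (B.dsum C)).Iso (B.dsum (A.dsum C)) :=
  ⟨pairHom ((fstHom B C).comp (sndHom A (B.dsum C)))
      (pairHom (fstHom A (B.dsum C)) ((sndHom B C).comp (sndHom A (B.dsum C)))),
    bij_of_inv _ (pairHom ((fstHom A C).comp (sndHom B (A.dsum C)))
      (pairHom (fstHom B (A.dsum C)) ((sndHom A C).comp (sndHom B (A.dsum C)))))
    (fun _ _ => rfl) (fun _ _ => rfl)⟩

theorem iso_perm {L L' : List (ARep k n ε)} (h : L.Perm L') :
    (dsumList k n ε L).Iso (dsumList k n ε L') := by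
  induction h with
  | nil => exact iso_refl _
  | cons A _ ih => exact iso_dsum (iso_refl A) ih
  | swap A B L => exact iso_swap _ _ _
  | trans _ _ h1 h2 => exact iso_trans h1 h2

theorem maxV_of_mar {T : ARep k n ε} (hT : MaxAlmostRigid T) :
    ∃ S, MaxV n ε S ∧ T.Iso (FRep k n ε S) := by
  obtain ⟨L, hL, hi⟩ := decomp T
  have hAR := ar_iso hi hT.1
  have hn := nodup_of_ar hL hAR
  have hrr : ∀ e ∈ L, Ret (II k n ε e) (dsumList k n ε (L.map (II k n ε))) :=
    fun e he => (ret_list hL (hL e he)).2 he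
  have hO : ∀ e ∈ L, ∀ f ∈ L, ¬Ovl ε e f := fun e he f hf =>
    ovl_of_ar hAR (hL e he) (hL f hf) (hrr e he) (hrr f hf)
  refine ⟨L.toFinset, ⟨?_, ?_, ?_⟩, ?_⟩
  · exact fun e he => hL e (List.mem_toFinset.1 he)
  · exact fun e he f hf => hO e (List.mem_toFinset.1 he) f (List.mem_toFinset.1 hf)
  · intro e he hc
    by_contra hne
    rw [List.mem_toFinset] at hne
    have key : AlmostRigid (dsumList k n ε ((e :: L).map (II k n ε))) := by
      apply ar_list
      · intro f hf
        rcases List.mem_cons.1 hf with rfl | hf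
        · exact he
        · exact hL f hf
      · exact List.nodup_cons.2 ⟨hne, hn⟩
      · intro a ha b hb
        rcases List.mem_cons.1 ha with ha1 | ha1 <;> rcases List.mem_cons.1 hb with hb1 | hb1
        · rw [ha1, hb1]
          rintro ⟨_, h, _⟩
          rcases h with h | h <;> exact lt_irrefl _ h.1
        · rw [ha1]
          exact (hc b (List.mem_toFinset.2 hb1)).1
        · rw [hb1]
          exact (hc a (List.mem_toFinset.2 ha1)).2
        · exact hO a ha1 b hb1
    refine hT.2 (II k n ε e) (II_nonzero he) (ar_iso ?_ key)
    exact iso_trans (iso_comm _ _) (iso_dsum (iso_symm hi) (iso_refl _))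
  · exact iso_trans hi (iso_perm ((List.toFinset_toList hn).symm.map _))

end PartE
end CambrianA

namespace CambrianA

/-- the number of isomorphism classes of maximal almost rigid
representations of `Q` is the Catalan number `C(2n+2, n+1)/(n+2)`. -/
theorem stmt_11 (k : Type) [Field k] (n : ℕ) (ε : ℕ → Bool) :
    ∃ L : List (ARep k n ε), L.length = (2 * n + 2).choose (n + 1) / (n + 2) ∧
      (∀ M ∈ L, MaxAlmostRigid M) ∧ (L.Pairwise fun A B => ¬A.Iso B) ∧
      ∀ T : ARep k n ε, MaxAlmostRigid T → ∃ M ∈ L, T.Iso M := by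
  obtain ⟨L, hlen, hnd, hmem⟩ := comb_main n ε
  refine ⟨L.map (FRep k n ε), by rw [List.length_map, hlen], ?_, ?_, ?_⟩
  · intro M hM
    obtain ⟨S, hS, rfl⟩ := List.mem_map.1 hM
    exact mar_of_maxV ((hmem S).1 hS)
  · rw [List.pairwise_map]
    refine List.Pairwise.imp_of_mem ?_ hnd
    intro S S' hS hS' hne hiso
    exact hne (F_inj ((hmem S).1 hS).1 ((hmem S').1 hS').1 hiso)
  · intro T hT
    obtain ⟨S, hS, hi⟩ := maxV_of_mar hT
    exact ⟨_, List.mem_map.2 ⟨S, (hmem S).2 hS, rfl⟩, hi⟩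

end CambrianA
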